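/- arXiv:2305.06887 — 2 statements merged into one kernel-verified Lean document; each statement's English description precedes it below -/
import Mathlib

section
/- Let n ≥ 1, κ > 0, and let (X, Y) be jointly Gaussian random vectors on ℝ^n × ℝ^n with positive-definite joint covariance matrix K having blocks K_X, K_Y, K_XY, K_YX. Let Z ~ N(0, κ I_n) be independent of (X, Y) and set U = X + Z. Define the conditional covariance matrix K_{X|Y} = K_X − K_XY K_Y^{-1} K_YX, with eigenvalues λ_1^{(X|Y)}, …, λ_n^{(X|Y)}. Then I(U; X) − I(U; Y) = (1/2) Σ_{i=1}^n log((λ_i^{(X|Y)} + κ)/κ), where for jointly distributed random vectors A, B the mutual information I(A;B) is the Kullback–Leibler divergence D(P_{AB} ‖ P_A ⊗ P_B). -/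
open MeasureTheory
open scoped Matrix

noncomputable section

/-- Density of the multivariate Gaussian `N(m, S)` with respect to Lebesgue measure. -/
def gaussDensity {ι : Type*} [Fintype ι] [DecidableEq ι]
    (m : ι → ℝ) (S : Matrix ι ι ℝ) (x : ι → ℝ) : ℝ :=
  (2 * Real.pi) ^ (-(Fintype.card ι : ℝ) / 2) * S.det ^ (-(1 : ℝ) / 2) *
    Real.exp (-(1 / 2) * ((x - m) ⬝ᵥ S⁻¹ *ᵥ (x - m)))

/-- The multivariate Gaussian measure `N(m, S)` on `ℝ^ι`. -/
def gaussMeasure {ι : Type*} [Fintype ι] [DecidableEq ι]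
    (m : ι → ℝ) (S : Matrix ι ι ℝ) : Measure (ι → ℝ) :=
  volume.withDensity fun x => ENNReal.ofReal (gaussDensity m S x)

/-- Kullback–Leibler divergence `D(μ‖ν) = ∫ log (dμ/dν) dμ` (for `μ ≪ ν`). -/
def KLdiv {E : Type*} [MeasurableSpace E] (μ ν : Measure E) : ℝ :=
  ∫ x, Real.log ((μ.rnDeriv ν) x).toReal ∂μ

open ProbabilityTheory

lemma map_withDensity_comp_aux {α β : Type*} [MeasurableSpace α] [MeasurableSpace β]
    (μ : Measure α) {f : α → β} (hf : Measurable f) {g : β → ENNReal} (hg : Measurable g) :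
    (μ.withDensity (fun x => g (f x))).map f = (μ.map f).withDensity g := by
  ext s hs
  rw [Measure.map_apply hf hs, withDensity_apply _ hs, withDensity_apply _ (hf hs),
    setLIntegral_map hs hg hf]

lemma measurable_gaussDensity {ι : Type*} [Fintype ι] [DecidableEq ι]
    (m : ι → ℝ) (S : Matrix ι ι ℝ) : Measurable (gaussDensity m S) := by
  unfold gaussDensity
  refine Measurable.const_mul ?_ _
  refine Real.measurable_exp.comp (Measurable.const_mul ?_ _)
  refine Continuous.measurable ?_
  simp only [dotProduct, Matrix.mulVec]
  fun_prop

lemma gaussDensity_pos {ι : Type*} [Fintype ι] [DecidableEq ι]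
    (m : ι → ℝ) {S : Matrix ι ι ℝ} (hS : 0 < S.det) (x : ι → ℝ) : 0 < gaussDensity m S x := by
  unfold gaussDensity
  have := Real.pi_pos
  positivity

/-- standard Gaussian -/
def stdG (ι : Type*) [Fintype ι] : Measure (ι → ℝ) := Measure.pi (fun _ => gaussianReal 0 1)

instance {ι : Type*} [Fintype ι] : IsProbabilityMeasure (stdG ι) := by
  unfold stdG; infer_instance

lemma prod_gaussianPDFReal {ι : Type*} [Fintype ι] [DecidableEq ι] (x : ι → ℝ) :
    ∏ i, gaussianPDFReal 0 1 (x i) = gaussDensity 0 1 x := by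
  unfold gaussDensity gaussianPDFReal
  rw [Finset.prod_mul_distrib, ← Real.exp_sum]
  congr 1
  · have h : (√(2 * Real.pi * ((1:NNReal):ℝ)))⁻¹ = (2 * Real.pi) ^ (-(1:ℝ)/2) := by
      rw [Real.sqrt_eq_rpow, ← Real.rpow_neg (by have := Real.pi_pos; positivity)]
      norm_num
    rw [h]
    simp only [Finset.prod_const, Matrix.det_one, Real.one_rpow, mul_one]
    rw [← Real.rpow_mul_natCast (by have := Real.pi_pos; positivity)]
    congr 1
    simp only [Finset.card_univ]; ring
  · congr 1
    simp only [inv_one, Matrix.one_mulVec, dotProduct, sub_zero, Finset.mul_sum]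
    refine Finset.sum_congr rfl fun i _ => ?_
    simp; ring

lemma stdG_eq {ι : Type*} [Fintype ι] [DecidableEq ι] :
    stdG ι = gaussMeasure 0 1 := by
  unfold stdG
  symm
  refine Eq.symm (Measure.pi_eq (μ := fun _ : ι => gaussianReal 0 1) ?_)
  intro s hs
  unfold gaussMeasure
  rw [withDensity_apply _ (MeasurableSet.univ_pi hs)]
  simp_rw [← prod_gaussianPDFReal]
  rw [volume_pi, Measure.restrict_pi_pi]
  rw [← ofReal_integral_eq_lintegral_ofReal]
  · rw [integral_fintype_prod_eq_prod (f := fun _ x => gaussianPDFReal 0 1 x),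
      ENNReal.ofReal_prod_of_nonneg]
    · refine Finset.prod_congr rfl fun i _ => ?_
      rw [gaussianReal_apply_eq_integral _ one_ne_zero]
    · intro i _
      exact integral_nonneg fun x => gaussianPDFReal_nonneg _ _ _
  · exact Integrable.fintype_prod (f := fun _ x => gaussianPDFReal 0 1 x)
      fun i => (integrable_gaussianPDFReal 0 1).restrict
  · exact Filter.Eventually.of_forall fun x =>
      Finset.prod_nonneg fun i _ => gaussianPDFReal_nonneg _ _ _

open scoped MatrixOrder in
lemma exists_sqrt {ι : Type*} [Fintype ι] [DecidableEq ι] {S : Matrix ι ι ℝ} (hS : S.PosDef) :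
    ∃ R : Matrix ι ι ℝ, R * Rᵀ = S ∧ R.det ≠ 0 := by
  have h1 := CFC.sqrt_mul_sqrt_self S hS.posSemidef.nonneg
  have h2 : (CFC.sqrt S)ᵀ = CFC.sqrt S := by
    have := (CFC.sqrt_nonneg S).isSelfAdjoint.star_eq
    rwa [Matrix.star_eq_conjTranspose, Matrix.conjTranspose_eq_transpose_of_trivial] at this
  refine ⟨CFC.sqrt S, by rw [h2, h1], fun h => ?_⟩
  have h3 := hS.det_pos
  rw [← h1, Matrix.det_mul, h] at h3
  simp at h3

lemma quad_sqrt {ι : Type*} [Fintype ι] [DecidableEq ι] (R : Matrix ι ι ℝ) (hR : R.det ≠ 0)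
    (z : ι → ℝ) : (R *ᵥ z) ⬝ᵥ (R * Rᵀ)⁻¹ *ᵥ (R *ᵥ z) = z ⬝ᵥ z := by
  have hu : IsUnit R.det := isUnit_iff_ne_zero.2 hR
  have hu' : IsUnit Rᵀ.det := by rwa [Matrix.det_transpose]
  rw [Matrix.mulVec_mulVec, Matrix.mul_inv_rev, Matrix.mul_assoc, Matrix.nonsing_inv_mul _ hu,
    mul_one, Matrix.dotProduct_mulVec, ← Matrix.mulVec_transpose, Matrix.mulVec_mulVec,
    ← Matrix.transpose_nonsing_inv, Matrix.transpose_transpose, Matrix.nonsing_inv_mul _ hu,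
    Matrix.one_mulVec]

lemma gaussMeasure_eq_map {ι : Type*} [Fintype ι] [DecidableEq ι] (m : ι → ℝ)
    (R : Matrix ι ι ℝ) (hR : R.det ≠ 0) :
    gaussMeasure m (R * Rᵀ) = (stdG ι).map (fun z => m + R *ᵥ z) := by
  have hmeas : Measurable (fun z : ι → ℝ => m + R *ᵥ z) := by
    refine Continuous.measurable ?_
    fun_prop
  have hvol : (volume : Measure (ι → ℝ)).map (fun z => m + R *ᵥ z)
      = ENNReal.ofReal (|R.det⁻¹|) • volume := by
    have h := Real.map_matrix_volume_pi_eq_smul_volume_pi hR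
    have h2 : (fun z => m + R *ᵥ z) = (fun z => m + z) ∘ (Matrix.toLin' R) := by
      ext z; simp
    rw [h2, ← Measure.map_map (by fun_prop) (by exact (LinearMap.continuous_of_finiteDimensional _).measurable), h,
      Measure.map_smul, map_add_left_eq_self]
  have hdens : ∀ z, ENNReal.ofReal (gaussDensity 0 1 z) =
      ENNReal.ofReal |R.det| * ENNReal.ofReal (gaussDensity m (R * Rᵀ) (m + R *ᵥ z)) := by
    intro z
    rw [← ENNReal.ofReal_mul (abs_nonneg _)]
    congr 1
    unfold gaussDensity
    rw [add_sub_cancel_left, quad_sqrt R hR, Matrix.det_mul, Matrix.det_transpose]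
    have : (R.det * R.det) ^ (-(1:ℝ)/2) = |R.det|⁻¹ := by
      rw [← abs_mul_abs_self, neg_div, Real.rpow_neg (by positivity), ← Real.sqrt_eq_rpow,
        Real.sqrt_mul_self (abs_nonneg _)]
    rw [this]
    have : |R.det| ≠ 0 := by simpa
    simp
    field_simp
  rw [stdG_eq]
  unfold gaussMeasure
  simp_rw [hdens]
  have hg : Measurable (fun x => ENNReal.ofReal |R.det| * ENNReal.ofReal (gaussDensity m (R * Rᵀ) x)) :=
    ((measurable_gaussDensity _ _).ennreal_ofReal).const_mul _
  rw [map_withDensity_comp_aux _ hmeas hg, hvol, withDensity_smul_measure]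
  have := withDensity_smul (μ := (volume : Measure (ι → ℝ))) (ENNReal.ofReal |R.det|)
    ((measurable_gaussDensity m (R * Rᵀ)).ennreal_ofReal)
  change _ = _ • volume.withDensity (ENNReal.ofReal |R.det| • _)
  rw [this, smul_smul, ← ENNReal.ofReal_mul (abs_nonneg _), ← abs_mul, inv_mul_cancel₀ hR]
  simp

lemma isProb_gaussMeasure {ι : Type*} [Fintype ι] [DecidableEq ι] (m : ι → ℝ)
    {S : Matrix ι ι ℝ} (hS : S.PosDef) : IsProbabilityMeasure (gaussMeasure m S) := by
  obtain ⟨R, rfl, hR⟩ := exists_sqrt hS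
  rw [gaussMeasure_eq_map m R hR]
  exact Measure.isProbabilityMeasure_map (Continuous.measurable (by fun_prop)).aemeasurable

lemma sq_stdG {ι : Type*} [Fintype ι] :
    Integrable (fun z : ι → ℝ => z ⬝ᵥ z) (stdG ι) ∧ ∫ z, z ⬝ᵥ z ∂(stdG ι) = Fintype.card ι := by
  have h1 : Integrable (fun x : ℝ => x * x) (gaussianReal 0 1) := by
    have := (memLp_id_gaussianReal (μ := 0) (v := 1) 2).integrable_sq
    simpa [pow_two] using this
  have h2 : ∫ x, x * x ∂(gaussianReal 0 1) = 1 := by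
    have := variance_id_gaussianReal (μ := 0) (v := 1)
    rw [variance_eq_integral measurable_id.aemeasurable] at this
    simpa [pow_two] using this
  have hi : ∀ i : ι, Integrable (fun z : ι → ℝ => z i * z i) (stdG ι) := fun i =>
    integrable_comp_eval (μ := fun _ : ι => gaussianReal 0 1) (i := i) h1
  simp only [dotProduct]
  refine ⟨integrable_finsetSum _ fun i _ => hi i, ?_⟩
  rw [integral_finsetSum _ fun i _ => hi i]
  have : ∀ i : ι, ∫ z, z i * z i ∂(stdG ι) = 1 := fun i => by
    rw [← h2]
    exact integral_comp_eval (μ := fun _ : ι => gaussianReal 0 1) (i := i) (f := fun x => x * x)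
      h1.aestronglyMeasurable
  simp [this]

lemma quad_gauss {ι : Type*} [Fintype ι] [DecidableEq ι] (m : ι → ℝ)
    {S : Matrix ι ι ℝ} (hS : S.PosDef) :
    Integrable (fun x : ι → ℝ => (x - m) ⬝ᵥ S⁻¹ *ᵥ (x - m)) (gaussMeasure m S) ∧
    ∫ x, (x - m) ⬝ᵥ S⁻¹ *ᵥ (x - m) ∂(gaussMeasure m S) = Fintype.card ι := by
  obtain ⟨R, rfl, hR⟩ := exists_sqrt hS
  rw [gaussMeasure_eq_map m R hR]
  have hm : AEMeasurable (fun z : ι → ℝ => m + R *ᵥ z) (stdG ι) :=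
    (Continuous.measurable (by fun_prop)).aemeasurable
  have hc : Continuous (fun x : ι → ℝ => (x - m) ⬝ᵥ (R * Rᵀ)⁻¹ *ᵥ (x - m)) := by
    simp only [dotProduct, Matrix.mulVec]
    fun_prop
  rw [integral_map hm hc.aestronglyMeasurable, integrable_map_measure hc.aestronglyMeasurable hm]
  simp only [Function.comp_def, add_sub_cancel_left, quad_sqrt R hR]
  exact sq_stdG

/-- `μ` has the characteristic function of `N(m,S)` -/
def HasCF {ι : Type*} [Fintype ι] (μ : Measure (ι → ℝ)) (m : ι → ℝ) (S : Matrix ι ι ℝ) : Prop :=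
  ∀ t : ι → ℝ, ∫ x, Complex.exp (((t ⬝ᵥ x : ℝ) : ℂ) * Complex.I) ∂μ =
    Complex.exp (((t ⬝ᵥ m : ℝ) : ℂ) * Complex.I - ((t ⬝ᵥ S *ᵥ t : ℝ) : ℂ) / 2)

lemma stdG_cf {ι : Type*} [Fintype ι] (t : ι → ℝ) :
    ∫ x, Complex.exp (((t ⬝ᵥ x : ℝ) : ℂ) * Complex.I) ∂(stdG ι) =
      Complex.exp (- ((t ⬝ᵥ t : ℝ) : ℂ) / 2) := by
  have h : ∀ x : ι → ℝ, Complex.exp (((t ⬝ᵥ x : ℝ) : ℂ) * Complex.I) =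
      ∏ i, Complex.exp (t i * x i * Complex.I) := by
    intro x
    rw [← Complex.exp_sum]
    simp [dotProduct, Finset.sum_mul]
  simp_rw [h]
  unfold stdG
  rw [integral_fintype_prod_eq_prod (f := fun i (x : ℝ) => Complex.exp (t i * x * Complex.I))]
  simp_rw [← charFun_apply_real, charFun_gaussianReal]
  rw [← Complex.exp_sum]
  congr 1
  simp [dotProduct, Finset.sum_div, neg_div, pow_two]

lemma hasCF_gauss {ι : Type*} [Fintype ι] [DecidableEq ι] (m : ι → ℝ)
    {S : Matrix ι ι ℝ} (hS : S.PosDef) : HasCF (gaussMeasure m S) m S := by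
  obtain ⟨R, rfl, hR⟩ := exists_sqrt hS
  rw [gaussMeasure_eq_map m R hR]
  intro t
  have hm : AEMeasurable (fun z : ι → ℝ => m + R *ᵥ z) (stdG ι) :=
    (Continuous.measurable (by fun_prop)).aemeasurable
  have hc : Continuous (fun x : ι → ℝ => Complex.exp (((t ⬝ᵥ x : ℝ) : ℂ) * Complex.I)) := by
    simp only [dotProduct]
    fun_prop
  rw [integral_map hm hc.aestronglyMeasurable]
  have h : ∀ z, Complex.exp (((t ⬝ᵥ (m + R *ᵥ z) : ℝ) : ℂ) * Complex.I) =
      Complex.exp (((t ⬝ᵥ m : ℝ) : ℂ) * Complex.I) *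
        Complex.exp ((((Rᵀ *ᵥ t) ⬝ᵥ z : ℝ) : ℂ) * Complex.I) := by
    intro z
    rw [← Complex.exp_add, dotProduct_add, Matrix.dotProduct_mulVec, Matrix.mulVec_transpose]
    push_cast; ring_nf
  simp_rw [h]
  have h2 : t ⬝ᵥ (R * Rᵀ) *ᵥ t = (Rᵀ *ᵥ t) ⬝ᵥ (Rᵀ *ᵥ t) := by
    rw [← Matrix.mulVec_mulVec, Matrix.dotProduct_mulVec t R, ← Matrix.mulVec_transpose]
  rw [integral_const_mul, stdG_cf, ← Complex.exp_add, h2]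
  congr 1; ring

lemma HasCF.eq {ι : Type*} [Fintype ι] {μ ν : Measure (ι → ℝ)}
    [IsFiniteMeasure μ] [IsFiniteMeasure ν] {m : ι → ℝ} {S : Matrix ι ι ℝ}
    (h1 : HasCF μ m S) (h2 : HasCF ν m S) : μ = ν := by
  classical
  apply Measure.ext_of_charFunDual
  ext L
  have hL : ∀ v, L v = (fun i => L (Pi.single i 1)) ⬝ᵥ v := by
    intro v
    conv_lhs => rw [pi_eq_sum_univ' v]
    simp [dotProduct, mul_comm]
  simp_rw [charFunDual_apply]
  rw [funext fun v => congrArg (fun r : ℝ => Complex.exp ((r : ℂ) * Complex.I)) (hL v)]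
  rw [h1, h2]

/-- splitting a vector indexed by a sum -/
def splitSum {ι κ : Type*} (w : ι ⊕ κ → ℝ) : (ι → ℝ) × (κ → ℝ) :=
  (fun i => w (Sum.inl i), fun i => w (Sum.inr i))

lemma measurable_splitSum {ι κ : Type*} : Measurable (splitSum (ι := ι) (κ := κ)) := by
  unfold splitSum; fun_prop

lemma splitSum_elim {ι κ : Type*} (w : (ι → ℝ) × (κ → ℝ)) :
    splitSum (Sum.elim w.1 w.2) = w := by
  simp [splitSum]

lemma elim_splitSum {ι κ : Type*} (w : ι ⊕ κ → ℝ) :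
    Sum.elim (splitSum w).1 (splitSum w).2 = w := by
  ext i; cases i <;> simp [splitSum]

lemma measurable_elim {ι κ : Type*} :
    Measurable (fun w : (ι → ℝ) × (κ → ℝ) => Sum.elim w.1 w.2) := by
  refine measurable_pi_iff.2 fun i => ?_
  cases i <;> simp <;> fun_prop

lemma map_splitSum_volume {ι κ : Type*} [Fintype ι] [Fintype κ] :
    (volume : Measure (ι ⊕ κ → ℝ)).map splitSum = (volume : Measure (ι → ℝ)).prod volume :=
  (volume_measurePreserving_sumPiEquivProdPi (fun _ : ι ⊕ κ => ℝ)).map_eq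

lemma sum_dot {ι κ : Type*} [Fintype ι] [Fintype κ] (t x : ι → ℝ) (s y : κ → ℝ) :
    Sum.elim t s ⬝ᵥ Sum.elim x y = t ⬝ᵥ x + s ⬝ᵥ y := by
  simp [dotProduct]

lemma sum_quad {ι κ : Type*} [Fintype ι] [Fintype κ] (t : ι → ℝ) (s : κ → ℝ)
    (A : Matrix ι ι ℝ) (B : Matrix ι κ ℝ) (C : Matrix κ ι ℝ) (D : Matrix κ κ ℝ) :
    Sum.elim t s ⬝ᵥ Matrix.fromBlocks A B C D *ᵥ Sum.elim t s =
      t ⬝ᵥ A *ᵥ t + t ⬝ᵥ B *ᵥ s + (s ⬝ᵥ C *ᵥ t + s ⬝ᵥ D *ᵥ s) := by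
  rw [Matrix.fromBlocks_mulVec, sum_dot]
  simp [dotProduct_add, Function.comp_def]

/-- joint characteristic function of a Gaussian on a product -/
def HasCF2 {ι κ : Type*} [Fintype ι] [Fintype κ] (P : Measure ((ι → ℝ) × (κ → ℝ)))
    (a : ι → ℝ) (b : κ → ℝ)
    (A : Matrix ι ι ℝ) (B : Matrix ι κ ℝ) (C : Matrix κ ι ℝ) (D : Matrix κ κ ℝ) : Prop :=
  ∀ (t : ι → ℝ) (s : κ → ℝ),
    ∫ w, Complex.exp (((t ⬝ᵥ w.1 + s ⬝ᵥ w.2 : ℝ) : ℂ) * Complex.I) ∂P =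
    Complex.exp (((t ⬝ᵥ a + s ⬝ᵥ b : ℝ) : ℂ) * Complex.I -
      ((t ⬝ᵥ A *ᵥ t + t ⬝ᵥ B *ᵥ s + (s ⬝ᵥ C *ᵥ t + s ⬝ᵥ D *ᵥ s) : ℝ) : ℂ) / 2)

lemma cont_cf {ι : Type*} [Fintype ι] (t : ι → ℝ) :
    Continuous (fun x : ι → ℝ => Complex.exp (((t ⬝ᵥ x : ℝ) : ℂ) * Complex.I)) := by
  simp only [dotProduct]
  fun_prop

lemma cont_cf2 {ι κ : Type*} [Fintype ι] [Fintype κ] (t : ι → ℝ) (s : κ → ℝ) :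
    Continuous (fun w : (ι → ℝ) × (κ → ℝ) =>
      Complex.exp (((t ⬝ᵥ w.1 + s ⬝ᵥ w.2 : ℝ) : ℂ) * Complex.I)) := by
  simp only [dotProduct]
  fun_prop

section block

variable {ι κ : Type*} [Fintype ι] [Fintype κ] [DecidableEq ι] [DecidableEq κ]
  {a : ι → ℝ} {b : κ → ℝ}
  {A : Matrix ι ι ℝ} {B : Matrix ι κ ℝ} {C : Matrix κ ι ℝ} {D : Matrix κ κ ℝ}

lemma hasCF2_gauss (hS : (Matrix.fromBlocks A B C D).PosDef) :
    HasCF2 ((gaussMeasure (Sum.elim a b) (Matrix.fromBlocks A B C D)).map splitSum) a b A B C D := by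
  intro t s
  rw [integral_map measurable_splitSum.aemeasurable (cont_cf2 t s).aestronglyMeasurable]
  have h := hasCF_gauss (Sum.elim a b) hS (Sum.elim t s)
  rw [sum_dot, sum_quad] at h
  rw [← h]
  congr 1
  ext w
  conv_rhs => rw [← elim_splitSum w, sum_dot]

lemma HasCF2.eq {P : Measure ((ι → ℝ) × (κ → ℝ))} [IsProbabilityMeasure P]
    (h : HasCF2 P a b A B C D) (hS : (Matrix.fromBlocks A B C D).PosDef) :
    P = (gaussMeasure (Sum.elim a b) (Matrix.fromBlocks A B C D)).map splitSum := by
  have := isProb_gaussMeasure (Sum.elim a b) hS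
  have hP : P = (P.map (fun w => Sum.elim w.1 w.2)).map splitSum := by
    rw [Measure.map_map measurable_splitSum measurable_elim]
    have : (splitSum ∘ fun w : (ι → ℝ) × (κ → ℝ) => Sum.elim w.1 w.2) = id := by
      ext1 w; exact splitSum_elim w
    rw [this, Measure.map_id]
  rw [hP]
  congr 1
  have := Measure.isProbabilityMeasure_map (μ := P) (measurable_elim (ι := ι) (κ := κ)).aemeasurable
  refine HasCF.eq (m := Sum.elim a b) (S := Matrix.fromBlocks A B C D) ?_ (hasCF_gauss _ hS)
  intro t
  rw [integral_map measurable_elim.aemeasurable (cont_cf t).aestronglyMeasurable]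
  rw [← elim_splitSum t]
  simp only [sum_dot, sum_quad]
  exact h _ _

lemma posDef_11 (hS : (Matrix.fromBlocks A B C D).PosDef) : A.PosDef :=
  hS.submatrix (e := Sum.inl) Sum.inl_injective

lemma posDef_22 (hS : (Matrix.fromBlocks A B C D).PosDef) : D.PosDef :=
  hS.submatrix (e := Sum.inr) Sum.inr_injective

lemma HasCF2.fst {P : Measure ((ι → ℝ) × (κ → ℝ))} [IsProbabilityMeasure P]
    (h : HasCF2 P a b A B C D) (hA : A.PosDef) :
    P.map Prod.fst = gaussMeasure a A := by
  have := isProb_gaussMeasure a hA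
  have := Measure.isProbabilityMeasure_map (μ := P) measurable_fst.aemeasurable
  refine HasCF.eq (m := a) (S := A) ?_ (hasCF_gauss _ hA)
  intro t
  rw [integral_map measurable_fst.aemeasurable (cont_cf t).aestronglyMeasurable]
  simpa using h t 0

lemma HasCF2.snd {P : Measure ((ι → ℝ) × (κ → ℝ))} [IsProbabilityMeasure P]
    (h : HasCF2 P a b A B C D) (hD : D.PosDef) :
    P.map Prod.snd = gaussMeasure b D := by
  have := isProb_gaussMeasure b hD
  have := Measure.isProbabilityMeasure_map (μ := P) measurable_snd.aemeasurable
  refine HasCF.eq (m := b) (S := D) ?_ (hasCF_gauss _ hD)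
  intro t
  rw [integral_map measurable_snd.aemeasurable (cont_cf t).aestronglyMeasurable]
  simpa using h 0 t

lemma log_gaussDensity {ι : Type*} [Fintype ι] [DecidableEq ι]
    (m : ι → ℝ) {S : Matrix ι ι ℝ} (hS : 0 < S.det) (x : ι → ℝ) :
    Real.log (gaussDensity m S x) = -(Fintype.card ι : ℝ) / 2 * Real.log (2 * Real.pi)
      - 1 / 2 * Real.log S.det - 1 / 2 * ((x - m) ⬝ᵥ S⁻¹ *ᵥ (x - m)) := by
  have := Real.pi_pos
  unfold gaussDensity
  rw [Real.log_mul (by positivity) (by positivity), Real.log_mul (by positivity) (by positivity),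
    Real.log_exp, Real.log_rpow (by positivity), Real.log_rpow (by positivity)]
  ring

lemma integral_aux {Ω : Type*} [MeasurableSpace Ω] (P : Measure Ω) [IsProbabilityMeasure P]
    (c : ℝ) {u v s : Ω → ℝ} (hu : Integrable u P) (hv : Integrable v P) (hs : Integrable s P) :
    ∫ w, (c + (1 / 2 * u w + 1 / 2 * v w - 1 / 2 * s w)) ∂P =
      c + (1 / 2 * (∫ w, u w ∂P) + 1 / 2 * (∫ w, v w ∂P) - 1 / 2 * ∫ w, s w ∂P) := by
  have hu' : Integrable (fun w => 1 / 2 * u w) P := hu.const_mul _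
  have hv' : Integrable (fun w => 1 / 2 * v w) P := hv.const_mul _
  have hs' : Integrable (fun w => 1 / 2 * s w) P := hs.const_mul _
  have huv : Integrable (fun w => 1 / 2 * u w + 1 / 2 * v w) P := hu'.add hv'
  have huvs : Integrable (fun w => 1 / 2 * u w + 1 / 2 * v w - 1 / 2 * s w) P := huv.sub hs'
  rw [integral_add (integrable_const _) huvs, integral_sub huv hs', integral_add hu' hv',
    integral_const_mul, integral_const_mul, integral_const_mul]
  simp

lemma HasCF2.KL {P : Measure ((ι → ℝ) × (κ → ℝ))} [IsProbabilityMeasure P]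
    (h : HasCF2 P a b A B C D) (hS : (Matrix.fromBlocks A B C D).PosDef) :
    KLdiv P ((P.map Prod.fst).prod (P.map Prod.snd)) =
      1 / 2 * (Real.log A.det + Real.log D.det - Real.log (Matrix.fromBlocks A B C D).det) := by
  have hA := posDef_11 hS
  have hD := posDef_22 hS
  have h1 := h.fst hA
  have h2 := h.snd hD
  have hP := h.eq hS
  set S := Matrix.fromBlocks A B C D with hSdef
  have p1 := isProb_gaussMeasure a hA
  have p2 := isProb_gaussMeasure b hD
  have pS := isProb_gaussMeasure (Sum.elim a b) hS
  -- densities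
  let f : (ι → ℝ) × (κ → ℝ) → ℝ := fun w => gaussDensity (Sum.elim a b) S (Sum.elim w.1 w.2)
  let g : (ι → ℝ) × (κ → ℝ) → ℝ := fun w => gaussDensity a A w.1 * gaussDensity b D w.2
  have hf : Measurable f := (measurable_gaussDensity _ _).comp measurable_elim
  have hg : Measurable g := ((measurable_gaussDensity _ _).comp measurable_fst).mul
    ((measurable_gaussDensity _ _).comp measurable_snd)
  have hf0 : ∀ w, 0 < f w := fun w => gaussDensity_pos _ hS.det_pos _
  have hg0 : ∀ w, 0 < g w := fun w =>
    mul_pos (gaussDensity_pos _ hA.det_pos _) (gaussDensity_pos _ hD.det_pos _)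
  have hPf : P = ((volume : Measure (ι → ℝ)).prod (volume : Measure (κ → ℝ))).withDensity
      (fun w => ENNReal.ofReal (f w)) := by
    rw [hP, ← map_splitSum_volume, ← map_withDensity_comp_aux _ measurable_splitSum hf.ennreal_ofReal]
    unfold gaussMeasure
    simp only [f, elim_splitSum]
  have hQg : (gaussMeasure a A).prod (gaussMeasure b D) =
      ((volume : Measure (ι → ℝ)).prod (volume : Measure (κ → ℝ))).withDensity
      (fun w => ENNReal.ofReal (g w)) := by
    unfold gaussMeasure
    rw [prod_withDensity (measurable_gaussDensity _ _).ennreal_ofReal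
      (measurable_gaussDensity _ _).ennreal_ofReal]
    simp only [g]
    congr 1
    ext w
    rw [ENNReal.ofReal_mul (gaussDensity_pos _ hA.det_pos _).le]
  rw [h1, h2]
  set Q := (gaussMeasure a A).prod (gaussMeasure b D) with hQ
  have hr : Measurable (fun w => ENNReal.ofReal (f w / g w)) := (hf.div hg).ennreal_ofReal
  have hPQ : P = Q.withDensity (fun w => ENNReal.ofReal (f w / g w)) := by
    rw [hQg, hPf, ← withDensity_mul _ hg.ennreal_ofReal hr]
    congr 1
    ext w
    simp only [Pi.mul_apply]
    rw [← ENNReal.ofReal_mul (hg0 w).le, mul_div_cancel₀ _ (hg0 w).ne']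
  have hac : P ≪ Q := by rw [hPQ]; exact withDensity_absolutelyContinuous _ _
  have hrn : P.rnDeriv Q =ᵐ[P] fun w => ENNReal.ofReal (f w / g w) := by
    refine hac.ae_le ?_
    have := Measure.rnDeriv_withDensity Q hr
    rwa [← hPQ] at this
  unfold KLdiv
  -- integrals of quadratic forms
  have qS := quad_gauss (Sum.elim a b) hS
  have qA := quad_gauss a hA
  have qD := quad_gauss b hD
  have cS : Continuous (fun x : ι ⊕ κ → ℝ => (x - Sum.elim a b) ⬝ᵥ S⁻¹ *ᵥ (x - Sum.elim a b)) := by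
    simp only [dotProduct, Matrix.mulVec]
    fun_prop
  have cA : Continuous (fun x : ι → ℝ => (x - a) ⬝ᵥ A⁻¹ *ᵥ (x - a)) := by
    simp only [dotProduct, Matrix.mulVec]
    fun_prop
  have cD : Continuous (fun x : κ → ℝ => (x - b) ⬝ᵥ D⁻¹ *ᵥ (x - b)) := by
    simp only [dotProduct, Matrix.mulVec]
    fun_prop
  have hPS : gaussMeasure (Sum.elim a b) S = P.map (fun w => Sum.elim w.1 w.2) := by
    rw [hP, Measure.map_map measurable_elim measurable_splitSum]
    have : ((fun w : (ι → ℝ) × (κ → ℝ) => Sum.elim w.1 w.2) ∘ splitSum) = id := by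
      ext1 w; exact elim_splitSum w
    rw [this, Measure.map_id]
  rw [hPS, integral_map measurable_elim.aemeasurable cS.aestronglyMeasurable,
    integrable_map_measure cS.aestronglyMeasurable measurable_elim.aemeasurable] at qS
  rw [← h1, integral_map measurable_fst.aemeasurable cA.aestronglyMeasurable,
    integrable_map_measure cA.aestronglyMeasurable measurable_fst.aemeasurable] at qA
  rw [← h2, integral_map measurable_snd.aemeasurable cD.aestronglyMeasurable,
    integrable_map_measure cD.aestronglyMeasurable measurable_snd.aemeasurable] at qD
  simp only [Function.comp_def] at qS qA qD
  have hlogI : ∫ w, Real.log ((P.rnDeriv Q) w).toReal ∂P =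
      ∫ w, (1 / 2 * (Real.log A.det + Real.log D.det - Real.log S.det)
        + (1 / 2 * ((w.1 - a) ⬝ᵥ A⁻¹ *ᵥ (w.1 - a)) + 1 / 2 * ((w.2 - b) ⬝ᵥ D⁻¹ *ᵥ (w.2 - b))
        - 1 / 2 * ((Sum.elim w.1 w.2 - Sum.elim a b) ⬝ᵥ S⁻¹ *ᵥ
            (Sum.elim w.1 w.2 - Sum.elim a b)))) ∂P := by
    refine integral_congr_ae ?_
    filter_upwards [hrn] with w hw
    rw [hw, ENNReal.toReal_ofReal (div_pos (hf0 w) (hg0 w)).le,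
      Real.log_div (hf0 w).ne' (hg0 w).ne']
    simp only [f, g]
    rw [Real.log_mul (gaussDensity_pos _ hA.det_pos _).ne' (gaussDensity_pos _ hD.det_pos _).ne',
      log_gaussDensity _ hA.det_pos, log_gaussDensity _ hD.det_pos, log_gaussDensity _ hS.det_pos]
    simp only [Fintype.card_sum]
    push_cast
    ring
  rw [hlogI, integral_aux P _ qA.1 qD.1 qS.1, qA.2, qD.2, qS.2]
  simp only [Fintype.card_sum]
  push_cast
  ring

end block

lemma log_det_add {n : ℕ} {C : Matrix (Fin n) (Fin n) ℝ} (hC : C.IsHermitian) (hpos : C.PosDef)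
    {κ : ℝ} (hκ : 0 < κ) :
    Real.log (C + κ • (1 : Matrix (Fin n) (Fin n) ℝ)).det -
      Real.log (κ • (1 : Matrix (Fin n) (Fin n) ℝ)).det =
      ∑ i, Real.log ((hC.eigenvalues i + κ) / κ) := by
  have hev : ∀ i, 0 < hC.eigenvalues i := fun i => hpos.eigenvalues_pos i
  have h1 : (C + κ • (1 : Matrix (Fin n) (Fin n) ℝ)).det = ∏ i, (hC.eigenvalues i + κ) := by
    have h := Matrix.eval_charpoly C (-κ)
    rw [hC.charpoly_eq, Polynomial.eval_prod] at h
    have h3 : Matrix.scalar (Fin n) (-κ) - C = -(C + κ • (1 : Matrix (Fin n) (Fin n) ℝ)) := by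
      rw [Matrix.scalar_apply, ← Matrix.smul_one_eq_diagonal, neg_smul]
      abel
    rw [h3, Matrix.det_neg] at h
    have h4 : ∏ i, Polynomial.eval (-κ) (Polynomial.X - Polynomial.C ((hC.eigenvalues i : ℝ))) =
        (-1) ^ Fintype.card (Fin n) * ∏ i, (hC.eigenvalues i + κ) := by
      rw [← Finset.card_univ, ← Finset.prod_const, ← Finset.prod_mul_distrib]
      refine Finset.prod_congr rfl fun i _ => ?_
      simp; ring
    have h5 := h4.symm.trans h
    exact (mul_left_cancel₀ (pow_ne_zero _ (by norm_num)) h5).symm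
  rw [h1, Matrix.det_smul, Matrix.det_one, mul_one, Real.log_prod (fun i _ => by
    have := hev i; positivity), Real.log_pow]
  simp_rw [fun i => Real.log_div (show hC.eigenvalues i + κ ≠ 0 by have := hev i; positivity) hκ.ne']
  simp

lemma posDef_schur {n : ℕ} {KX KXY KYX KY : Matrix (Fin n) (Fin n) ℝ}
    (hK : (Matrix.fromBlocks KX KXY KYX KY).PosDef) : (KX - KXY * KY⁻¹ * KYX).PosDef := by
  have hD := posDef_22 hK
  have hdet := hK.det_pos
  letI := hD.isUnit.invertible
  rw [Matrix.det_fromBlocks₂₂, Matrix.invOf_eq_nonsing_inv] at hdet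
  have hT : KYX = KXYᴴ := by
    have := hK.1
    rw [Matrix.isHermitian_fromBlocks_iff] at this
    exact this.2.1.symm
  subst hT
  have h := (Matrix.PosDef.fromBlocks₂₂ KX KXY hD).1 hK.posSemidef
  refine h.posDef_iff_isUnit.2 ?_
  rw [Matrix.isUnit_iff_isUnit_det, isUnit_iff_ne_zero]
  intro h0
  rw [h0] at hdet
  simp at hdet

lemma posDef_UX {n : ℕ} {KX : Matrix (Fin n) (Fin n) ℝ} (hX : KX.PosDef) {κ : ℝ} (hκ : 0 < κ) :
    (Matrix.fromBlocks (KX + κ • (1 : Matrix (Fin n) (Fin n) ℝ)) KX KX KX).PosDef ∧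
    (Matrix.fromBlocks (KX + κ • (1 : Matrix (Fin n) (Fin n) ℝ)) KX KX KX).det =
      KX.det * (κ • (1 : Matrix (Fin n) (Fin n) ℝ)).det := by
  letI := hX.isUnit.invertible
  have hu : IsUnit KX.det := (Matrix.isUnit_iff_isUnit_det _).1 hX.isUnit
  have h1 : (KX + κ • (1 : Matrix (Fin n) (Fin n) ℝ)) - KX * KX⁻¹ * KX = κ • 1 := by
    rw [Matrix.mul_nonsing_inv _ hu, one_mul]; abel
  have hdet : (Matrix.fromBlocks (KX + κ • (1 : Matrix (Fin n) (Fin n) ℝ)) KX KX KX).det =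
      KX.det * (κ • (1 : Matrix (Fin n) (Fin n) ℝ)).det := by
    rw [Matrix.det_fromBlocks₂₂, Matrix.invOf_eq_nonsing_inv, h1]
  refine ⟨?_, hdet⟩
  have hT : KXᴴ = KX := hX.1
  have h := (Matrix.PosDef.fromBlocks₂₂ (KX + κ • (1 : Matrix (Fin n) (Fin n) ℝ)) KX hX).2 (by
    rw [hT, h1]
    exact Matrix.PosSemidef.one.smul hκ.le)
  rw [hT] at h
  refine h.posDef_iff_isUnit.2 ?_
  rw [Matrix.isUnit_iff_isUnit_det, hdet, isUnit_iff_ne_zero, Matrix.det_smul, Matrix.det_one]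
  have := hX.det_pos
  positivity

lemma posDef_UY {n : ℕ} {KX KXY KYX KY : Matrix (Fin n) (Fin n) ℝ}
    (hK : (Matrix.fromBlocks KX KXY KYX KY).PosDef) {κ : ℝ} (hκ : 0 < κ) :
    (Matrix.fromBlocks (KX + κ • (1 : Matrix (Fin n) (Fin n) ℝ)) KXY KYX KY).PosDef ∧
    (Matrix.fromBlocks (KX + κ • (1 : Matrix (Fin n) (Fin n) ℝ)) KXY KYX KY).det =
      KY.det * ((KX - KXY * KY⁻¹ * KYX) + κ • (1 : Matrix (Fin n) (Fin n) ℝ)).det := by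
  have hD := posDef_22 hK
  letI := hD.isUnit.invertible
  constructor
  · have h1 : Matrix.fromBlocks (KX + κ • (1 : Matrix (Fin n) (Fin n) ℝ)) KXY KYX KY =
      Matrix.fromBlocks KX KXY KYX KY + Matrix.diagonal (Sum.elim (fun _ => κ) (fun _ => 0)) := by
      rw [← Matrix.fromBlocks_diagonal, Matrix.fromBlocks_add]
      simp [← Matrix.smul_one_eq_diagonal]
    rw [h1]
    refine hK.add_posSemidef ?_
    refine Matrix.PosSemidef.diagonal ?_
    intro i; cases i <;> simp [hκ.le]
  · rw [Matrix.det_fromBlocks₂₂, Matrix.invOf_eq_nonsing_inv]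
    congr 2; abel

/-- **Gaussian mutual-information difference.** If `(X,Y)` is jointly Gaussian with
positive-definite joint covariance `K = [[K_X, K_XY],[K_YX, K_Y]]`, `Z ~ N(0, κ I_n)` is
independent of `(X,Y)`, and `U = X + Z`, then
`I(U;X) − I(U;Y) = ½ ∑ᵢ log((λᵢ^{(X|Y)} + κ)/κ)`,
where the `λᵢ^{(X|Y)}` are the eigenvalues of `K_{X|Y} = K_X − K_XY K_Y⁻¹ K_YX` and
`I(A;B) = D(P_{AB} ‖ P_A ⊗ P_B)`. -/
theorem gaussian_mutual_information_difference
    {n : ℕ} (hn : 1 ≤ n) (κ : ℝ) (hκ : 0 < κ)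
    (mX mY : Fin n → ℝ) (KX KXY KYX KY : Matrix (Fin n) (Fin n) ℝ)
    (hK : (Matrix.fromBlocks KX KXY KYX KY).PosDef)
    (hcond : (KX - KXY * KY⁻¹ * KYX).IsHermitian)
    -- the joint law of (X, Y)
    (lawXY : Measure ((Fin n → ℝ) × (Fin n → ℝ)))
    (hlawXY : lawXY =
      (gaussMeasure (Sum.elim mX mY) (Matrix.fromBlocks KX KXY KYX KY)).map
        (fun w => (fun i => w (Sum.inl i), fun i => w (Sum.inr i))))
    -- the joint law of ((X, Y), Z), with Z ~ N(0, κ I_n) independent of (X, Y)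
    (lawXYZ : Measure (((Fin n → ℝ) × (Fin n → ℝ)) × (Fin n → ℝ)))
    (hlawXYZ : lawXYZ =
      lawXY.prod (gaussMeasure (0 : Fin n → ℝ) (κ • (1 : Matrix (Fin n) (Fin n) ℝ)))) :
    -- I(U;X) - I(U;Y) with U = X + Z
    KLdiv (lawXYZ.map fun w => (w.1.1 + w.2, w.1.1))
        ((lawXYZ.map fun w => w.1.1 + w.2).prod (lawXY.map Prod.fst)) -
      KLdiv (lawXYZ.map fun w => (w.1.1 + w.2, w.1.2))
        ((lawXYZ.map fun w => w.1.1 + w.2).prod (lawXY.map Prod.snd)) =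
      (1 / 2) * ∑ i, Real.log ((hcond.eigenvalues i + κ) / κ) := by

  classical
  have hX := posDef_11 hK
  have hY := posDef_22 hK
  have hZ : (κ • (1 : Matrix (Fin n) (Fin n) ℝ)).PosDef := Matrix.PosDef.one.smul hκ
  have pK := isProb_gaussMeasure (Sum.elim mX mY) hK
  have pZ := isProb_gaussMeasure (0 : Fin n → ℝ) hZ
  have hcf : HasCF2 lawXY mX mY KX KXY KYX KY := by
    rw [hlawXY]; exact hasCF2_gauss hK
  have p1 : IsProbabilityMeasure lawXY := by
    rw [hlawXY]; exact Measure.isProbabilityMeasure_map measurable_splitSum.aemeasurable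
  have hcz := hasCF_gauss (0 : Fin n → ℝ) hZ
  set lawZ := gaussMeasure (0 : Fin n → ℝ) (κ • (1 : Matrix (Fin n) (Fin n) ℝ)) with hlawZ
  have p2 : IsProbabilityMeasure lawXYZ := by rw [hlawXYZ]; infer_instance
  have m1 : Measurable (fun w : ((Fin n → ℝ) × (Fin n → ℝ)) × (Fin n → ℝ) =>
    (w.1.1 + w.2, w.1.1)) := by fun_prop
  have m2 : Measurable (fun w : ((Fin n → ℝ) × (Fin n → ℝ)) × (Fin n → ℝ) =>
    (w.1.1 + w.2, w.1.2)) := by fun_prop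
  have hfst : lawXYZ.map Prod.fst = lawXY := by
    rw [hlawXYZ, Measure.map_fst_prod]; simp
  have pUX := Measure.isProbabilityMeasure_map (μ := lawXYZ) m1.aemeasurable
  have pUY := Measure.isProbabilityMeasure_map (μ := lawXYZ) m2.aemeasurable
  have e1 : lawXYZ.map (fun w => w.1.1 + w.2) =
      (lawXYZ.map fun w => (w.1.1 + w.2, w.1.1)).map Prod.fst := by
    rw [Measure.map_map measurable_fst m1]; rfl
  have e1' : lawXYZ.map (fun w => w.1.1 + w.2) =
      (lawXYZ.map fun w => (w.1.1 + w.2, w.1.2)).map Prod.fst := by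
    rw [Measure.map_map measurable_fst m2]; rfl
  have e2 : lawXY.map Prod.fst = (lawXYZ.map fun w => (w.1.1 + w.2, w.1.1)).map Prod.snd := by
    rw [Measure.map_map measurable_snd m1, ← hfst, Measure.map_map measurable_fst measurable_fst]
    rfl
  have e3 : lawXY.map Prod.snd = (lawXYZ.map fun w => (w.1.1 + w.2, w.1.2)).map Prod.snd := by
    rw [Measure.map_map measurable_snd m2, ← hfst, Measure.map_map measurable_snd measurable_fst]
    rfl
  have hsmul : ∀ t : Fin n → ℝ, (κ • (1 : Matrix (Fin n) (Fin n) ℝ)) *ᵥ t = κ • t := by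
    intro t; rw [Matrix.smul_mulVec, Matrix.one_mulVec]
  have hUX : HasCF2 (lawXYZ.map fun w => (w.1.1 + w.2, w.1.1)) mX mX
      (KX + κ • (1 : Matrix (Fin n) (Fin n) ℝ)) KX KX KX := by
    intro t s
    rw [integral_map m1.aemeasurable (cont_cf2 t s).aestronglyMeasurable, hlawXYZ]
    have h1 := integral_prod_mul (μ := lawXY) (ν := lawZ)
      (fun w => Complex.exp ((((t + s) ⬝ᵥ w.1 + (0 : Fin n → ℝ) ⬝ᵥ w.2 : ℝ) : ℂ) * Complex.I))
      (fun z => Complex.exp (((t ⬝ᵥ z : ℝ) : ℂ) * Complex.I))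
    rw [hcf, hcz, ← Complex.exp_add] at h1
    refine Eq.trans ?_ (h1.trans ?_)
    · congr 1
      ext w
      rw [← Complex.exp_add]
      congr 1
      simp only [dotProduct_add, add_dotProduct, zero_dotProduct]
      push_cast; ring
    · congr 1
      simp only [Matrix.add_mulVec, Matrix.mulVec_add, dotProduct_add, add_dotProduct,
        zero_dotProduct, Matrix.mulVec_zero, dotProduct_zero]
      push_cast; ring
  have hUY : HasCF2 (lawXYZ.map fun w => (w.1.1 + w.2, w.1.2)) mX mY
      (KX + κ • (1 : Matrix (Fin n) (Fin n) ℝ)) KXY KYX KY := by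
    intro t s
    rw [integral_map m2.aemeasurable (cont_cf2 t s).aestronglyMeasurable, hlawXYZ]
    have h1 := integral_prod_mul (μ := lawXY) (ν := lawZ)
      (fun w => Complex.exp (((t ⬝ᵥ w.1 + s ⬝ᵥ w.2 : ℝ) : ℂ) * Complex.I))
      (fun z => Complex.exp (((t ⬝ᵥ z : ℝ) : ℂ) * Complex.I))
    rw [hcf, hcz, ← Complex.exp_add] at h1
    refine Eq.trans ?_ (h1.trans ?_)
    · congr 1
      ext w
      rw [← Complex.exp_add]
      congr 1
      simp only [dotProduct_add]
      push_cast; ring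
    · congr 1
      simp only [Matrix.add_mulVec, dotProduct_add, dotProduct_zero]
      push_cast; ring
  obtain ⟨q1, d1⟩ := posDef_UX hX hκ
  obtain ⟨q2, d2⟩ := posDef_UY hK hκ
  have k1 := hUX.KL q1
  have k2 := hUY.KL q2
  rw [← e1, ← e2] at k1
  rw [← e1', ← e3] at k2
  have hC := posDef_schur hK
  have hCpos := (hC.add hZ).det_pos
  rw [k1, k2, d1, d2, Real.log_mul hX.det_pos.ne' hZ.det_pos.ne',
    Real.log_mul hY.det_pos.ne' hCpos.ne', ← log_det_add hcond hC hκ]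
  ring

end
end

section
/- Let 𝒳 and 𝒰 be finite alphabets and let (X_i, U_i)_{i∈ℕ} be a jointly stationary and ergodic process on 𝒳 × 𝒰 (i.e., its law on ((𝒳×𝒰)^ℕ) is shift-invariant and ergodic). Let P_{U^n}, P_{X^n}, P_{U^n|X^n} denote the finite-dimensional distributions. Then the normalized information density Z_n = (1/n) log(P_{U^n|X^n}(U^n|X^n)/P_{U^n}(U^n)) converges in probability to the mutual information rate lim_{n→∞} (1/n) I(X^n; U^n), which exists; consequently the spectral sup- and inf-mutual information rates coincide: Ī(X;U) = I̲(X;U) = lim_{n→∞} (1/n) I(X^n; U^n). -/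
open Filter MeasureTheory

noncomputable section

/-- Probability of an event under a pmf. -/
def prEv {Ω : Type*} [Fintype Ω] (μ : Ω → ℝ) (S : Set Ω) : ℝ :=
  ∑ ω, S.indicator μ ω

/-- `p-limsup` of a sequence of real random variables `Z n` on finite sample spaces
with laws `μ n`. -/
def pLimsupF {Ω : ℕ → Type*} [∀ n, Fintype (Ω n)]
    (μ : ∀ n, Ω n → ℝ) (Z : ∀ n, Ω n → ℝ) : ℝ :=
  sInf {α : ℝ | Tendsto (fun n => prEv (μ n) {ω | α < Z n ω}) atTop (nhds 0)}

/-- `p-liminf` of a sequence of real random variables `Z n` on finite sample spaces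
with laws `μ n`. -/
def pLiminfF {Ω : ℕ → Type*} [∀ n, Fintype (Ω n)]
    (μ : ∀ n, Ω n → ℝ) (Z : ∀ n, Ω n → ℝ) : ℝ :=
  sSup {α : ℝ | Tendsto (fun n => prEv (μ n) {ω | Z n ω < α}) atTop (nhds 0)}

/-- The shift map on one-sided sequences. -/
def shift {α : Type*} : (ℕ → α) → ℕ → α := fun ω i => ω (i + 1)

theorem mean_ergodic_L1 {Ω : Type*} [MeasurableSpace Ω] {μ : Measure Ω} [IsProbabilityMeasure μ]
    {T : Ω → Ω} (hT : Ergodic T μ) {g : Ω → ℝ} (hg : MemLp g 2 μ) :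
    Tendsto (fun n : ℕ => ∫ ω, |(n : ℝ)⁻¹ * (∑ i ∈ Finset.range n, g (T^[i] ω)) - ∫ ω, g ω ∂μ| ∂μ)
      atTop (nhds 0) := by
  have hmp := hT.toMeasurePreserving
  let K : Lp ℝ 2 μ →L[ℝ] Lp ℝ 2 μ :=
    (Lp.compMeasurePreservingₗᵢ ℝ T hmp).toContinuousLinearMap
  have hK1 : ‖K‖ ≤ 1 := LinearIsometry.norm_toContinuousLinearMap_le _
  have hlim := K.tendsto_birkhoffAverage_orthogonalProjection hK1 (hg.toLp g)
  set Lm : Lp ℝ 2 μ := ((K.eqLocus (1 : Lp ℝ 2 μ →L[ℝ] Lp ℝ 2 μ)).orthogonalProjectionOnto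
    (hg.toLp g) : Lp ℝ 2 μ) with hLm
  have hfix : Lp.compMeasurePreserving T hmp Lm = Lm := by
    have : Lm ∈ K.eqLocus (1 : Lp ℝ 2 μ →L[ℝ] Lp ℝ 2 μ) := by
      rw [hLm]; exact Subtype.mem _
    have h2 : K Lm = Lm := by simpa using this
    exact h2
  obtain ⟨c, hc⟩ : ∃ c, (Lm : Ω → ℝ) =ᵐ[μ] Function.const Ω c := by
    refine hT.ae_eq_const_of_ae_eq_comp_ae (Lp.aestronglyMeasurable Lm) ?_
    have := Lp.coeFn_compMeasurePreserving Lm hmp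
    rw [hfix] at this
    exact this.symm
  have hiter : ∀ i, ((K^[i] (hg.toLp g) : Lp ℝ 2 μ) : Ω → ℝ) =ᵐ[μ] fun ω => g (T^[i] ω) := by
    intro i
    have h1 : K^[i] (hg.toLp g) = Lp.compMeasurePreserving T^[i] (hmp.iterate i) (hg.toLp g) := by
      rw [← Lp.compMeasurePreserving_iterate]; rfl
    rw [h1, Lp.toLp_compMeasurePreserving]
    exact MemLp.coeFn_toLp _
  have hsum : ∀ s : Finset ℕ, ((∑ i ∈ s, K^[i] (hg.toLp g) : Lp ℝ 2 μ) : Ω → ℝ) =ᵐ[μ]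
      fun ω => ∑ i ∈ s, g (T^[i] ω) := by
    intro s
    induction s using Finset.induction_on with
    | empty =>
      filter_upwards [Lp.coeFn_zero ℝ 2 μ] with ω h
      simp
    | insert a s ha ih =>
      rw [Finset.sum_insert ha]
      filter_upwards [Lp.coeFn_add (K^[a] (hg.toLp g)) (∑ i ∈ s, K^[i] (hg.toLp g)), ih, hiter a]
        with ω h1 h2 h3
      rw [h1, Pi.add_apply, h2, h3, Finset.sum_insert ha]
  have havg : ∀ n : ℕ, ((birkhoffAverage ℝ K _root_.id n (hg.toLp g) - Lm : Lp ℝ 2 μ) : Ω → ℝ)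
      =ᵐ[μ] fun ω => (n : ℝ)⁻¹ * (∑ i ∈ Finset.range n, g (T^[i] ω)) - c := by
    intro n
    filter_upwards [Lp.coeFn_sub (birkhoffAverage ℝ K _root_.id n (hg.toLp g)) Lm, hc,
      Lp.coeFn_smul (n : ℝ)⁻¹ (∑ i ∈ Finset.range n, K^[i] (hg.toLp g)),
      hsum (Finset.range n)] with ω h1 h2 h3 h4
    rw [h1, Pi.sub_apply, h2]
    have : birkhoffAverage ℝ K _root_.id n (hg.toLp g)
      = (n : ℝ)⁻¹ • ∑ i ∈ Finset.range n, K^[i] (hg.toLp g) := rfl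
    rw [this, h3, Pi.smul_apply, h4]; rfl
  have hle : ∀ n : ℕ, ∫ ω, |(n : ℝ)⁻¹ * (∑ i ∈ Finset.range n, g (T^[i] ω)) - c| ∂μ
      ≤ ‖birkhoffAverage ℝ K _root_.id n (hg.toLp g) - Lm‖ := by
    intro n
    set u := birkhoffAverage ℝ K _root_.id n (hg.toLp g) - Lm
    have e1 : ∫ ω, |(n : ℝ)⁻¹ * (∑ i ∈ Finset.range n, g (T^[i] ω)) - c| ∂μ = ∫ ω, ‖u ω‖ ∂μ := by
      refine integral_congr_ae ?_
      filter_upwards [havg n] with ω h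
      rw [h]; rfl
    rw [e1, integral_norm_eq_lintegral_enorm (Lp.aestronglyMeasurable u), Lp.norm_def,
      ← eLpNorm_one_eq_lintegral_enorm]
    exact ENNReal.toReal_mono (Lp.eLpNorm_ne_top u)
      (eLpNorm_le_eLpNorm_of_exponent_le (by norm_num) (Lp.aestronglyMeasurable u))
  have h0 : Tendsto (fun n : ℕ => ∫ ω, |(n : ℝ)⁻¹ * (∑ i ∈ Finset.range n, g (T^[i] ω)) - c| ∂μ)
      atTop (nhds 0) := by
    refine squeeze_zero (fun n => integral_nonneg fun ω => abs_nonneg _) hle ?_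
    exact tendsto_iff_norm_sub_tendsto_zero.mp hlim
  have hgi : Integrable g μ := hg.integrable (by norm_num)
  have hgii : ∀ i, Integrable (fun ω => g (T^[i] ω)) μ := fun i =>
    (hmp.iterate i).integrable_comp_of_integrable hgi
  have hint : ∀ i, ∫ ω, g (T^[i] ω) ∂μ = ∫ ω, g ω ∂μ := by
    intro i
    have := integral_map (hmp.iterate i).measurable.aemeasurable (f := g)
      (by rw [(hmp.iterate i).map_eq]; exact hgi.aestronglyMeasurable)
    rw [(hmp.iterate i).map_eq] at this
    exact this.symm
  have hcc : c = ∫ ω, g ω ∂μ := by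
    have h1 : Tendsto (fun _ : ℕ => |(∫ ω, g ω ∂μ) - c|) atTop (nhds 0) := by
      refine squeeze_zero' (Eventually.of_forall fun n => abs_nonneg _) ?_ h0
      filter_upwards [eventually_gt_atTop 0] with n hn
      have hn' : (n : ℝ) ≠ 0 := by positivity
      have : (∫ ω, g ω ∂μ) - c
          = ∫ ω, ((n : ℝ)⁻¹ * (∑ i ∈ Finset.range n, g (T^[i] ω)) - c) ∂μ := by
        rw [integral_sub ((integrable_finsetSum _ fun i _ => hgii i).const_mul _)
          (integrable_const _), integral_const_mul, integral_finsetSum _ fun i _ => hgii i]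
        simp [hint, hn']
      rw [this]
      exact abs_integral_le_integral_abs
    have := tendsto_nhds_unique h1 tendsto_const_nhds
    have := abs_eq_zero.mp this.symm
    linarith
  rw [← hcc]; exact h0

section SMB

set_option linter.unusedSectionVars false

variable {Ω A : Type*} [MeasurableSpace Ω] [Fintype A] [MeasurableSpace A]
  [DiscreteMeasurableSpace A]

/-- The word of length `n` read off the orbit of `ω`. -/
def wd (T : Ω → Ω) (f : Ω → A) (n : ℕ) (ω : Ω) : Fin n → A := fun i => f (T^[i] ω)

/-- Word probabilities. -/
def wp (μ : Measure Ω) (T : Ω → Ω) (f : Ω → A) (n : ℕ) (w : Fin n → A) : ℝ :=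
  μ.real {ω | wd T f n ω = w}

/-- Conditional probability of the first letter given the following ones. -/
def cp (μ : Measure Ω) (T : Ω → Ω) (f : Ω → A) (n : ℕ) (w : Fin (n + 1) → A) : ℝ :=
  wp μ T f (n + 1) w / wp μ T f n (Fin.tail w)

/-- Backward Markov approximation of order `k`. -/
def mq (μ : Measure Ω) (T : Ω → Ω) (f : Ω → A) (k : ℕ) : (n : ℕ) → (Fin n → A) → ℝ
  | 0, _ => 1
  | n + 1, w => cp μ T f (min k n)
      (fun i => w (Fin.castLE (Nat.succ_le_succ (Nat.min_le_right k n)) i)) *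
      mq μ T f k n (Fin.tail w)

variable {μ : Measure Ω} [IsProbabilityMeasure μ] {T : Ω → Ω} {f : Ω → A}

theorem measurable_wd (hT : Measurable T) (hf : Measurable f) (n : ℕ) :
    Measurable (wd T f n) :=
  measurable_pi_lambda _ fun i => hf.comp (hT.iterate i)

theorem wd_succ (n : ℕ) (ω : Ω) :
    wd T f (n + 1) ω = Fin.cons (f ω) (wd T f n (T ω)) := by
  funext i
  refine Fin.cases ?_ (fun j => ?_) i
  · simp [wd]
  · simp [wd]

theorem tail_wd (n : ℕ) (ω : Ω) : Fin.tail (wd T f (n + 1) ω) = wd T f n (T ω) := by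
  rw [wd_succ, Fin.tail_cons]

theorem wp_nonneg (n : ℕ) (w : Fin n → A) : 0 ≤ wp μ T f n w := measureReal_nonneg

theorem wp_le_one (n : ℕ) (w : Fin n → A) : wp μ T f n w ≤ 1 := measureReal_le_one

theorem integrable_wd (hT : Measurable T) (hf : Measurable f) (n : ℕ) (Φ : (Fin n → A) → ℝ) :
    Integrable (fun ω => Φ (wd T f n ω)) μ := by
  have hm : Measurable fun ω => Φ (wd T f n ω) :=
    (measurable_of_finite Φ).comp (measurable_wd hT hf n)
  refine Integrable.of_bound hm.aestronglyMeasurable (∑ w, |Φ w|) (Eventually.of_forall fun ω => ?_)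
  exact Finset.single_le_sum (f := fun w => |Φ w|) (fun i _ => abs_nonneg _) (Finset.mem_univ _)

theorem integral_wd (hT : Measurable T) (hf : Measurable f) (n : ℕ) (Φ : (Fin n → A) → ℝ) :
    ∫ ω, Φ (wd T f n ω) ∂μ = ∑ w, wp μ T f n w * Φ w := by
  have hm := measurable_wd hT hf n
  have : IsProbabilityMeasure (μ.map (wd T f n)) := Measure.isProbabilityMeasure_map hm.aemeasurable
  rw [← integral_map (f := Φ) hm.aemeasurable (measurable_of_finite Φ).aestronglyMeasurable,
    integral_fintype .of_finite]
  refine Finset.sum_congr rfl fun w _ => ?_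
  rw [map_measureReal_apply hm (measurableSet_singleton w)]
  rfl

theorem sum_wp (hT : Measurable T) (hf : Measurable f) (n : ℕ) :
    ∑ w, wp μ T f n w = 1 := by
  have := integral_wd (μ := μ) hT hf n (fun _ => 1)
  simpa using this.symm

theorem ae_wp_pos (_hT : Measurable T) (_hf : Measurable f) (n : ℕ) :
    ∀ᵐ ω ∂μ, 0 < wp μ T f n (wd T f n ω) := by
  have : ∀ᵐ ω ∂μ, ∀ w : Fin n → A, wp μ T f n w = 0 → wd T f n ω ≠ w := by
    rw [ae_all_iff]
    intro w
    by_cases h : wp μ T f n w = 0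
    · have h' : μ {ω | wd T f n ω = w} = 0 := by
        rwa [wp, measureReal_eq_zero_iff] at h
      have := measure_eq_zero_iff_ae_notMem.mp h'
      filter_upwards [this] with ω hω _
      exact hω
    · exact Eventually.of_forall fun ω h2 => absurd h2 h
  filter_upwards [this] with ω hω
  exact lt_of_le_of_ne (wp_nonneg _ _) fun h => hω _ h.symm rfl

theorem sum_cons_wp (hT : MeasurePreserving T μ μ) (hf : Measurable f) (n : ℕ) (v : Fin n → A) :
    ∑ a, wp μ T f (n + 1) (Fin.cons a v) = wp μ T f n v := by
  have hm := measurable_wd hT.measurable hf n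
  have hm' := measurable_wd hT.measurable hf (n + 1)
  have h1 : wp μ T f n v = μ.real (T ⁻¹' {ω | wd T f n ω = v}) :=
    (hT.measureReal_preimage (hm (measurableSet_singleton v)).nullMeasurableSet).symm
  have h2 : T ⁻¹' {ω | wd T f n ω = v}
      = ⋃ a : A, {ω | wd T f (n + 1) ω = Fin.cons a v} := by
    ext ω
    simp only [Set.mem_preimage, Set.mem_ofPred_eq, Set.mem_iUnion, wd_succ]
    constructor
    · rintro rfl; exact ⟨_, rfl⟩
    · rintro ⟨a, h⟩; exact (Fin.cons_inj.mp h).2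
  rw [h1, h2, measureReal_iUnion_fintype]
  · rfl
  · intro a b hab
    refine Set.disjoint_left.mpr fun ω ha hb => hab ?_
    have ha' : wd T f (n + 1) ω = Fin.cons a v := ha
    have hb' : wd T f (n + 1) ω = Fin.cons b v := hb
    exact (Fin.cons_inj.mp (ha'.symm.trans hb')).1
  · intro a
    exact hm' (measurableSet_singleton _)

theorem cp_nonneg (n : ℕ) (w : Fin (n + 1) → A) : 0 ≤ cp μ T f n w :=
  div_nonneg (wp_nonneg _ _) (wp_nonneg _ _)

theorem sum_cp_le (hT : MeasurePreserving T μ μ) (hf : Measurable f) (n : ℕ) (v : Fin n → A) :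
    ∑ a, cp μ T f n (Fin.cons a v) ≤ 1 := by
  simp only [cp, Fin.tail_cons]
  rw [← Finset.sum_div, sum_cons_wp hT hf]
  exact div_self_le_one _

theorem cp_le_one (hT : MeasurePreserving T μ μ) (hf : Measurable f) (n : ℕ)
    (w : Fin (n + 1) → A) : cp μ T f n w ≤ 1 := by
  rw [← Fin.cons_self_tail w]
  exact (Finset.single_le_sum (f := fun a => cp μ T f n (Fin.cons a (Fin.tail w)))
    (fun a _ => cp_nonneg _ _) (Finset.mem_univ (w 0))).trans (sum_cp_le hT hf n _)

theorem mq_nonneg (k n : ℕ) (w : Fin n → A) : 0 ≤ mq μ T f k n w := by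
  induction n with
  | zero => simp [mq]
  | succ n ih => exact mul_nonneg (cp_nonneg _ _) (ih _)

theorem sum_mq_le (hT : MeasurePreserving T μ μ) (hf : Measurable f) (k n : ℕ) :
    ∑ w, mq μ T f k n w ≤ 1 := by
  induction n with
  | zero => simp [mq]
  | succ n ih =>
    rw [← (Fin.consEquiv fun _ : Fin (n + 1) => A).sum_comp, Fintype.sum_prod_type,
      Finset.sum_comm]
    refine (Finset.sum_le_sum fun v _ => ?_).trans ih
    have h : ∀ a, mq μ T f k (n + 1) (Fin.consEquiv (fun _ : Fin (n + 1) => A) (a, v))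
        = cp μ T f (min k n) (Fin.cons a fun i => v (Fin.castLE (Nat.min_le_right k n) i))
          * mq μ T f k n v := by
      intro a
      have e : (fun i => (Fin.cons a v : Fin (n + 1) → A)
          (Fin.castLE (Nat.succ_le_succ (Nat.min_le_right k n)) i))
          = (Fin.cons a fun i => v (Fin.castLE (Nat.min_le_right k n) i)) := by
        funext i
        refine Fin.cases ?_ (fun j => ?_) i
        · rfl
        · rfl
      simp only [mq, Fin.consEquiv, Equiv.coe_fn_mk, Fin.tail_cons]
      rw [← e]
    simp only [h]
    rw [← Finset.sum_mul]
    exact mul_le_of_le_one_left (mq_nonneg _ _ _) (sum_cp_le hT hf _ _)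

/-- conditional information function -/
def gi (μ : Measure Ω) (T : Ω → Ω) (f : Ω → A) (n : ℕ) (ω : Ω) : ℝ :=
  -Real.log (cp μ T f n (wd T f (n + 1) ω))

theorem ae_cp_pos (hT : MeasurePreserving T μ μ) (hf : Measurable f) (n : ℕ) :
    ∀ᵐ ω ∂μ, 0 < cp μ T f n (wd T f (n + 1) ω) := by
  filter_upwards [ae_wp_pos (μ := μ) hT.measurable hf (n + 1),
    hT.quasiMeasurePreserving.ae (ae_wp_pos (μ := μ) hT.measurable hf n)] with ω h1 h2
  rw [cp, tail_wd]
  positivity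

theorem mq_wd_succ (k n : ℕ) (ω : Ω) : mq μ T f k (n + 1) (wd T f (n + 1) ω)
    = cp μ T f (min k n) (wd T f (min k n + 1) ω) * mq μ T f k n (wd T f n (T ω)) := by
  rw [mq, tail_wd]; rfl

theorem ae_mq_pos (hT : MeasurePreserving T μ μ) (hf : Measurable f) (k n : ℕ) :
    ∀ᵐ ω ∂μ, 0 < mq μ T f k n (wd T f n ω) := by
  induction n with
  | zero => simp [mq]
  | succ n ih =>
    filter_upwards [ae_cp_pos hT hf (min k n), hT.quasiMeasurePreserving.ae ih] with ω h1 h2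
    rw [mq_wd_succ]
    exact mul_pos h1 h2

/-- block entropy -/
def bent (μ : Measure Ω) (T : Ω → Ω) (f : Ω → A) (n : ℕ) : ℝ :=
  ∫ ω, -Real.log (wp μ T f n (wd T f n ω)) ∂μ

theorem integral_comp_mp (hT : MeasurePreserving T μ μ) {g : Ω → ℝ} (hg : Integrable g μ) :
    ∫ ω, g (T ω) ∂μ = ∫ ω, g ω ∂μ := by
  have := integral_map hT.measurable.aemeasurable (f := g)
    (by rw [hT.map_eq]; exact hg.aestronglyMeasurable)
  rw [hT.map_eq] at this
  exact this.symm

theorem integral_gi (hT : MeasurePreserving T μ μ) (hf : Measurable f) (n : ℕ) :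
    ∫ ω, gi μ T f n ω ∂μ = bent μ T f (n + 1) - bent μ T f n := by
  have i1 := integrable_wd (μ := μ) hT.measurable hf n (fun w => -Real.log (wp μ T f n w))
  have i2 := integrable_wd (μ := μ) hT.measurable hf (n + 1)
    (fun w => -Real.log (wp μ T f (n + 1) w))
  have e : bent μ T f n = ∫ ω, -Real.log (wp μ T f n (wd T f n (T ω))) ∂μ :=
    (integral_comp_mp hT i1).symm
  have i3 : Integrable (fun ω => -Real.log (wp μ T f n (wd T f n (T ω)))) μ :=
    hT.integrable_comp_of_integrable i1
  rw [e, bent, ← integral_sub i2 i3]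
  refine integral_congr_ae ?_
  filter_upwards [ae_wp_pos (μ := μ) hT.measurable hf (n + 1),
    hT.quasiMeasurePreserving.ae (ae_wp_pos (μ := μ) hT.measurable hf n)] with ω h1 h2
  rw [gi, cp, tail_wd, Real.log_div h1.ne' h2.ne']
  ring

theorem gi_nonneg (hT : MeasurePreserving T μ μ) (hf : Measurable f) (n : ℕ) (ω : Ω) :
    0 ≤ gi μ T f n ω :=
  neg_nonneg.mpr (Real.log_nonpos (cp_nonneg _ _) (cp_le_one hT hf _ _))

theorem bent_zero : bent μ T f 0 = 0 := by
  have : ∀ w : Fin 0 → A, wp μ T f 0 w = 1 := by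
    intro w
    have : {ω | wd T f 0 ω = w} = Set.univ := by
      ext ω; simp only [Set.mem_ofPred_eq, Set.mem_univ, iff_true]; exact Subsingleton.elim _ _
    rw [wp, this]; simp
  simp [bent, this]

/-- entropy rate -/
def erate (μ : Measure Ω) (T : Ω → Ω) (f : Ω → A) : ℝ := ⨅ n, ∫ ω, gi μ T f n ω ∂μ

theorem erate_le (hT : MeasurePreserving T μ μ) (hf : Measurable f) (n : ℕ) :
    erate μ T f ≤ ∫ ω, gi μ T f n ω ∂μ :=
  ciInf_le ⟨0, by rintro _ ⟨n, rfl⟩; exact integral_nonneg (gi_nonneg hT hf n)⟩ n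

theorem mul_erate_le (hT : MeasurePreserving T μ μ) (hf : Measurable f) (n : ℕ) :
    n * erate μ T f ≤ bent μ T f n := by
  induction n with
  | zero => simp [bent_zero]
  | succ n ih =>
    have := erate_le (μ := μ) hT hf n
    rw [integral_gi hT hf] at this
    push_cast
    linarith

/-- difference between the Markov log-likelihood and the Birkhoff sum is bounded in L1 -/
theorem mq_birkhoff (hT : MeasurePreserving T μ μ) (hf : Measurable f) (k : ℕ) :
    ∃ C : ℝ, ∀ n, k ≤ n → ∫ ω, |-Real.log (mq μ T f k n (wd T f n ω))
      - ∑ i ∈ Finset.range n, gi μ T f k (T^[i] ω)| ∂μ ≤ C := by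
  have hgi : Integrable (gi μ T f k) μ := integrable_wd (μ := μ) hT.measurable hf (k + 1)
    (fun w => -Real.log (cp μ T f k w))
  refine ⟨∫ ω, |-Real.log (mq μ T f k k (wd T f k ω))
      - ∑ i ∈ Finset.range k, gi μ T f k (T^[i] ω)| ∂μ, fun n hn => ?_⟩
  induction n, hn using Nat.le_induction with
  | base => exact le_rfl
  | succ n hn ih =>
    refine le_trans (le_of_eq ?_) ih
    have hI : Integrable (fun ω => |-Real.log (mq μ T f k n (wd T f n ω))
      - ∑ i ∈ Finset.range n, gi μ T f k (T^[i] ω)|) μ :=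
      ((integrable_wd (μ := μ) hT.measurable hf n (fun w => -Real.log (mq μ T f k n w))).sub
      (integrable_finsetSum _ fun i _ => (hT.iterate i).integrable_comp_of_integrable hgi)).abs
    rw [← integral_comp_mp hT hI]
    refine integral_congr_ae ?_
    filter_upwards [ae_cp_pos hT hf k, hT.quasiMeasurePreserving.ae (ae_mq_pos hT hf k n)]
      with ω h1 h2
    rw [mq_wd_succ, min_eq_left hn, Real.log_mul h1.ne' h2.ne', Finset.sum_range_succ']
    simp only [Function.iterate_succ_apply, Function.iterate_zero, id]
    congr 1
    simp only [gi]
    ring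

theorem log_ratio_bound (hT : MeasurePreserving T μ μ) (hf : Measurable f) (k n : ℕ) :
    ∫ ω, |-Real.log (wp μ T f n (wd T f n ω)) - -Real.log (mq μ T f k n (wd T f n ω))| ∂μ
      ≤ (∫ ω, -Real.log (mq μ T f k n (wd T f n ω)) ∂μ) - bent μ T f n + 2 := by
  have i1 := integrable_wd (μ := μ) hT.measurable hf n (fun w => -Real.log (wp μ T f n w))
  have i2 := integrable_wd (μ := μ) hT.measurable hf n (fun w => -Real.log (mq μ T f k n w))
  have i3 := integrable_wd (μ := μ) hT.measurable hf n
    (fun w => mq μ T f k n w / wp μ T f n w)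
  have h3 : ∫ ω, mq μ T f k n (wd T f n ω) / wp μ T f n (wd T f n ω) ∂μ ≤ 1 := by
    rw [integral_wd hT.measurable hf n (fun w => mq μ T f k n w / wp μ T f n w)]
    refine (Finset.sum_le_sum fun w _ => ?_).trans (sum_mq_le (μ := μ) hT hf k n)
    by_cases h : wp μ T f n w = 0
    · rw [h]; simpa using mq_nonneg k n w
    · rw [mul_div_cancel₀ _ h]
  have key : ∫ ω, |-Real.log (wp μ T f n (wd T f n ω)) - -Real.log (mq μ T f k n (wd T f n ω))| ∂μ
      ≤ ∫ ω, ((-Real.log (mq μ T f k n (wd T f n ω)) - -Real.log (wp μ T f n (wd T f n ω)))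
        + 2 * (mq μ T f k n (wd T f n ω) / wp μ T f n (wd T f n ω))) ∂μ := by
    refine integral_mono_ae (i1.sub i2).abs ((i2.sub i1).add (i3.const_mul 2)) ?_
    filter_upwards [ae_wp_pos (μ := μ) hT.measurable hf n, ae_mq_pos hT hf k n] with ω h1 h2
    have hr : 0 < mq μ T f k n (wd T f n ω) / wp μ T f n (wd T f n ω) := div_pos h2 h1
    have := Real.log_le_sub_one_of_pos hr
    rw [Real.log_div h2.ne' h1.ne'] at this
    refine abs_le.mpr ⟨?_, ?_⟩ <;> linarith
  have j1 : Integrable (fun ω => -Real.log (mq μ T f k n (wd T f n ω))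
      - -Real.log (wp μ T f n (wd T f n ω))) μ := i2.sub i1
  rw [integral_add j1 (i3.const_mul 2), integral_sub i2 i1, integral_const_mul] at key
  rw [bent]
  linarith

theorem smb_L1 (hE : Ergodic T μ) (hf : Measurable f) :
    Tendsto (fun n : ℕ => ∫ ω, |(n : ℝ)⁻¹ * -Real.log (wp μ T f n (wd T f n ω)) - erate μ T f| ∂μ)
      atTop (nhds 0) := by
  have hT := hE.toMeasurePreserving
  rw [Metric.tendsto_atTop]
  intro ε hε
  obtain ⟨k, hk⟩ : ∃ k, ∫ ω, gi μ T f k ω ∂μ < erate μ T f + ε / 8 :=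
    exists_lt_of_ciInf_lt (by unfold erate; linarith)
  have hk' := erate_le (μ := μ) hT hf k
  obtain ⟨C, hC⟩ := mq_birkhoff (μ := μ) hT hf k
  have hgi : Integrable (gi μ T f k) μ := integrable_wd (μ := μ) hT.measurable hf (k + 1)
    (fun w => -Real.log (cp μ T f k w))
  have hg2 : MemLp (gi μ T f k) 2 μ := by
    refine MemLp.of_bound hgi.aestronglyMeasurable (∑ w, |-Real.log (cp μ T f k w)|)
      (Eventually.of_forall fun ω => ?_)
    exact Finset.single_le_sum (f := fun w => |-Real.log (cp μ T f k w)|)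
      (fun i _ => abs_nonneg _) (Finset.mem_univ (wd T f (k + 1) ω))
  have hm := mean_ergodic_L1 hE hg2
  have hc : Tendsto (fun n : ℕ => (n : ℝ)⁻¹ * (2 * C + 2)) atTop (nhds 0) := by
    simpa using (tendsto_inv_atTop_nhds_zero_nat (𝕜 := ℝ)).mul_const (2 * C + 2)
  have ev : ∀ᶠ n : ℕ in atTop, ∫ ω, |(n : ℝ)⁻¹ * -Real.log (wp μ T f n (wd T f n ω))
      - erate μ T f| ∂μ < ε := by
    filter_upwards [hm.eventually_lt_const (show (0 : ℝ) < ε / 4 by positivity),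
      hc.eventually_lt_const (show (0 : ℝ) < ε / 4 by positivity),
      eventually_ge_atTop k, eventually_gt_atTop 0] with n h1 h2 h3 h4
    have hn : (0 : ℝ) < n := by exact_mod_cast h4
    have i1 := integrable_wd (μ := μ) hT.measurable hf n (fun w => -Real.log (wp μ T f n w))
    have i2 := integrable_wd (μ := μ) hT.measurable hf n (fun w => -Real.log (mq μ T f k n w))
    have hgii : ∀ i, Integrable (fun ω => gi μ T f k (T^[i] ω)) μ := fun i =>
      (hT.iterate i).integrable_comp_of_integrable hgi
    have i3 : Integrable (fun ω => ∑ i ∈ Finset.range n, gi μ T f k (T^[i] ω)) μ :=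
      integrable_finsetSum _ fun i _ => hgii i
    have b1 := log_ratio_bound (μ := μ) hT hf k n
    have b2 := hC n h3
    have hS : ∫ ω, ∑ i ∈ Finset.range n, gi μ T f k (T^[i] ω) ∂μ = n * ∫ ω, gi μ T f k ω ∂μ := by
      rw [integral_finsetSum _ fun i _ => hgii i]
      rw [Finset.sum_congr rfl fun i _ => integral_comp_mp (hT.iterate i) hgi]
      simp
    have b3 : (∫ ω, -Real.log (mq μ T f k n (wd T f n ω)) ∂μ) ≤ n * (∫ ω, gi μ T f k ω ∂μ) + C := by
      have := (le_abs_self _).trans (abs_integral_le_integral_abs (μ := μ)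
        (f := fun ω => -Real.log (mq μ T f k n (wd T f n ω))
        - ∑ i ∈ Finset.range n, gi μ T f k (T^[i] ω)))
      rw [integral_sub i2 i3, hS] at this
      linarith
    have b4 := mul_erate_le (μ := μ) hT hf n
    have b5 : ∫ ω, |(n : ℝ)⁻¹ * -Real.log (wp μ T f n (wd T f n ω)) - erate μ T f| ∂μ ≤
        ∫ ω, ((n : ℝ)⁻¹ * |-Real.log (wp μ T f n (wd T f n ω))
            - -Real.log (mq μ T f k n (wd T f n ω))|
          + (n : ℝ)⁻¹ * |-Real.log (mq μ T f k n (wd T f n ω))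
            - ∑ i ∈ Finset.range n, gi μ T f k (T^[i] ω)|
          + |(n : ℝ)⁻¹ * (∑ i ∈ Finset.range n, gi μ T f k (T^[i] ω)) - ∫ ω, gi μ T f k ω ∂μ|
          + |(∫ ω, gi μ T f k ω ∂μ) - erate μ T f|) ∂μ := by
      refine integral_mono ((i1.const_mul _).sub (integrable_const _)).abs
        (((((i1.sub i2).abs.const_mul _).add ((i2.sub i3).abs.const_mul _)).add
        ((i3.const_mul _).sub (integrable_const _)).abs).add (integrable_const _)) fun ω => ?_
      dsimp only
      generalize -Real.log (wp μ T f n (wd T f n ω)) = a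
      generalize -Real.log (mq μ T f k n (wd T f n ω)) = b
      generalize (∑ i ∈ Finset.range n, gi μ T f k (T^[i] ω)) = c
      generalize (∫ ω, gi μ T f k ω ∂μ) = d
      have hi : |(n : ℝ)⁻¹| = (n : ℝ)⁻¹ := abs_of_pos (by positivity)
      rw [← hi, ← abs_mul, ← abs_mul, hi]
      have e : (n : ℝ)⁻¹ * a - erate μ T f = (n : ℝ)⁻¹ * (a - b) + (n : ℝ)⁻¹ * (b - c)
        + ((n : ℝ)⁻¹ * c - d) + (d - erate μ T f) := by ring
      rw [e]
      refine (abs_add_le _ _).trans (add_le_add_left ?_ _)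
      refine (abs_add_le _ _).trans (add_le_add_left ?_ _)
      exact abs_add_le _ _
    have j1 : Integrable (fun ω => (n : ℝ)⁻¹ * |-Real.log (wp μ T f n (wd T f n ω))
            - -Real.log (mq μ T f k n (wd T f n ω))|) μ := (i1.sub i2).abs.const_mul _
    have j2 : Integrable (fun ω => (n : ℝ)⁻¹ * |-Real.log (mq μ T f k n (wd T f n ω))
            - ∑ i ∈ Finset.range n, gi μ T f k (T^[i] ω)|) μ := (i2.sub i3).abs.const_mul _
    have j3 : Integrable (fun ω => |(n : ℝ)⁻¹ * (∑ i ∈ Finset.range n, gi μ T f k (T^[i] ω))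
            - ∫ ω, gi μ T f k ω ∂μ|) μ := ((i3.const_mul _).sub (integrable_const _)).abs
    rw [integral_add, integral_add, integral_add j1 j2,
      integral_const_mul, integral_const_mul, integral_const, probReal_univ, one_smul,
      abs_of_nonneg (sub_nonneg.mpr hk')] at b5
    rotate_left
    · exact j1.add j2
    · exact j3
    · exact (j1.add j2).add j3
    · exact integrable_const _
    have hinv : (0 : ℝ) ≤ (n : ℝ)⁻¹ := by positivity
    have c1 := mul_le_mul_of_nonneg_left (b1.trans (show _ ≤
      n * ((∫ ω, gi μ T f k ω ∂μ) - erate μ T f) + (C + 2) by nlinarith)) hinv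
    have c2 := mul_le_mul_of_nonneg_left b2 hinv
    rw [mul_add, inv_mul_cancel_left₀ hn.ne'] at c1
    have c3 : (n : ℝ)⁻¹ * (2 * C + 2) = (n : ℝ)⁻¹ * (C + 2) + (n : ℝ)⁻¹ * C := by ring
    linarith
  obtain ⟨N, hN⟩ := eventually_atTop.mp ev
  refine ⟨N, fun n hn => ?_⟩
  rw [Real.dist_eq, sub_zero, abs_of_nonneg (integral_nonneg fun ω => abs_nonneg _)]
  exact hN n hn

end SMB

theorem prEv_nonneg {Ω : Type*} [Fintype Ω] {P : Ω → ℝ} (hP : ∀ w, 0 ≤ P w) (S : Set Ω) :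
    0 ≤ prEv P S :=
  Finset.sum_nonneg fun w _ => Set.indicator_nonneg (fun w _ => hP w) w

theorem prEv_mono {Ω : Type*} [Fintype Ω] {P : Ω → ℝ} (hP : ∀ w, 0 ≤ P w) {S S' : Set Ω}
    (h : S ⊆ S') : prEv P S ≤ prEv P S' :=
  Finset.sum_le_sum fun w _ => Set.indicator_le_indicator_of_subset h hP w

theorem prEv_cover {Ω : Type*} [Fintype Ω] {P : Ω → ℝ} (hP : ∀ w, 0 ≤ P w) {S S' : Set Ω}
    (h : ∀ w, w ∈ S ∨ w ∈ S') : ∑ w, P w ≤ prEv P S + prEv P S' := by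
  rw [prEv, prEv, ← Finset.sum_add_distrib]
  refine Finset.sum_le_sum fun w _ => ?_
  have h1 := Set.indicator_nonneg (s := S) (fun w _ => hP w) w
  have h2 := Set.indicator_nonneg (s := S') (fun w _ => hP w) w
  rcases h w with h | h
  · rw [Set.indicator_of_mem h]; linarith
  · rw [Set.indicator_of_mem (s := S') h]; linarith

theorem prEv_markov {Ω : Type*} [Fintype Ω] {P Z : Ω → ℝ} (hP : ∀ w, 0 ≤ P w) {δ m : ℝ}
    (hδ : 0 < δ) : prEv P {w | δ ≤ |Z w - m|} ≤ δ⁻¹ * ∑ w, P w * |Z w - m| := by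
  rw [prEv, Finset.mul_sum]
  refine Finset.sum_le_sum fun w _ => ?_
  have h0 : 0 ≤ δ⁻¹ * (P w * |Z w - m|) := by have := hP w; positivity
  by_cases h : w ∈ {w | δ ≤ |Z w - m|}
  · rw [Set.indicator_of_mem h]
    have h' : δ ≤ |Z w - m| := h
    calc P w = δ⁻¹ * (P w * δ) := by field_simp
      _ ≤ _ := by have := hP w; gcongr
  · rw [Set.indicator_of_notMem h]; exact h0

theorem final_step {W : ℕ → Type*} [∀ n, Fintype (W n)] (P Z : ∀ n, W n → ℝ)
    (hP : ∀ n w, 0 ≤ P n w) (hs : ∀ n, ∑ w, P n w = 1) (m : ℝ)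
    (h : Tendsto (fun n => ∑ w, P n w * |Z n w - m|) atTop (nhds 0)) :
    (∀ δ > (0 : ℝ), Tendsto (fun n => prEv (P n) {w | δ ≤ |Z n w - m|}) atTop (nhds 0)) ∧
      pLimsupF P Z = m ∧ pLiminfF P Z = m := by
  have hδ : ∀ δ > (0 : ℝ),
      Tendsto (fun n => prEv (P n) {w | δ ≤ |Z n w - m|}) atTop (nhds 0) := by
    intro δ hδ
    refine squeeze_zero (fun n => prEv_nonneg (hP n) _) (fun n => prEv_markov (hP n) hδ) ?_
    simpa using h.const_mul δ⁻¹
  have up : ∀ α, m < α → Tendsto (fun n => prEv (P n) {w | α < Z n w}) atTop (nhds 0) := by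
    intro α hα
    refine squeeze_zero (fun n => prEv_nonneg (hP n) _) (fun n => prEv_mono (hP n) ?_)
      (hδ (α - m) (sub_pos.mpr hα))
    intro w hw
    have hw' : α < Z n w := hw
    exact le_trans (by linarith) (le_abs_self (Z n w - m))
  have dn : ∀ α, α < m → Tendsto (fun n => prEv (P n) {w | Z n w < α}) atTop (nhds 0) := by
    intro α hα
    refine squeeze_zero (fun n => prEv_nonneg (hP n) _) (fun n => prEv_mono (hP n) ?_)
      (hδ (m - α) (sub_pos.mpr hα))
    intro w hw
    have hw' : Z n w < α := hw
    exact le_trans (by linarith) (neg_le_abs (Z n w - m))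
  have excl : ∀ S S' : ∀ n, Set (W n), (∀ n w, w ∈ S n ∨ w ∈ S' n) →
      Tendsto (fun n => prEv (P n) (S n)) atTop (nhds 0) →
      Tendsto (fun n => prEv (P n) (S' n)) atTop (nhds 0) → False := by
    intro S S' hc h1 h2
    have h3 := h1.add h2
    have := ge_of_tendsto' h3 (fun n => (hs n).symm.le.trans (prEv_cover (hP n) (hc n)))
    norm_num at this
  refine ⟨hδ, ?_, ?_⟩
  · have hlb : ∀ α ∈ {α : ℝ | Tendsto (fun n => prEv (P n) {w | α < Z n w}) atTop (nhds 0)},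
        m ≤ α := by
      intro α hα
      by_contra hlt
      push Not at hlt
      obtain ⟨β, h1, h2⟩ := exists_between hlt
      refine excl _ _ (fun n w => ?_) hα (dn β h2)
      rcases lt_or_ge α (Z n w) with h | h
      · exact Or.inl h
      · exact Or.inr (lt_of_le_of_lt h h1)
    refine le_antisymm (le_of_forall_gt_imp_ge_of_dense fun α hα => ?_) (le_csInf ?_ hlb)
    · exact csInf_le ⟨m, hlb⟩ (up α hα)
    · exact ⟨m + 1, up _ (by linarith)⟩
  · have hub : ∀ α ∈ {α : ℝ | Tendsto (fun n => prEv (P n) {w | Z n w < α}) atTop (nhds 0)},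
        α ≤ m := by
      intro α hα
      by_contra hlt
      push Not at hlt
      obtain ⟨β, h1, h2⟩ := exists_between hlt
      refine excl _ _ (fun n w => ?_) hα (up β h1)
      rcases lt_or_ge (Z n w) α with h | h
      · exact Or.inl h
      · exact Or.inr (lt_of_lt_of_le h2 h)
    refine le_antisymm (csSup_le ?_ hub) (le_of_forall_lt_imp_le_of_dense fun α hα => ?_)
    · exact ⟨m - 1, dn _ (by linarith)⟩
    · exact le_csSup ⟨m, hub⟩ (dn α hα)

theorem shift_iterate {α : Type*} (i : ℕ) (ω : ℕ → α) : (shift^[i] ω) 0 = ω i := by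
  have : ∀ j, (shift^[i] ω) j = ω (j + i) := by
    induction i generalizing ω with
    | zero => intro j; rfl
    | succ i ih => intro j; rw [Function.iterate_succ_apply, ih]; simp only [shift]; congr 1
  simpa using this 0

/-- For a jointly stationary and ergodic process `(X_i, U_i)` on a finite alphabet,
the normalized information density converges in probability to the mutual information rate
`lim (1/n) I(X^n; U^n)` (which exists); consequently the spectral sup- and inf-mutual
information rates coincide and equal the mutual information rate. -/
theorem stationary_ergodic_spectral_mutual_information
    {𝒳 𝒰 : Type*} [Fintype 𝒳] [Fintype 𝒰]
    [MeasurableSpace 𝒳] [DiscreteMeasurableSpace 𝒳]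
    [MeasurableSpace 𝒰] [DiscreteMeasurableSpace 𝒰]
    (μ : Measure (ℕ → 𝒳 × 𝒰)) [IsProbabilityMeasure μ]
    (hErg : Ergodic shift μ)
    -- finite-dimensional distributions
    (Pn : ∀ n : ℕ, (Fin n → 𝒳 × 𝒰) → ℝ)
    (hPn : ∀ n w, Pn n w = (μ {ω | ∀ i : Fin n, ω i = w i}).toReal)
    (PXn : ∀ n : ℕ, (Fin n → 𝒳) → ℝ)
    (hPXn : ∀ n x, PXn n x = (μ {ω | ∀ i : Fin n, (ω i).1 = x i}).toReal)
    (PUn : ∀ n : ℕ, (Fin n → 𝒰) → ℝ)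
    (hPUn : ∀ n u, PUn n u = (μ {ω | ∀ i : Fin n, (ω i).2 = u i}).toReal)
    -- normalized information density (1/n) log (P_{U^n|X^n}(U^n|X^n) / P_{U^n}(U^n))
    (Z : ∀ n : ℕ, (Fin n → 𝒳 × 𝒰) → ℝ)
    (hZ : ∀ n w, Z n w = (1 / (n : ℝ)) *
      Real.log (Pn n w / (PXn n (fun i => (w i).1) * PUn n (fun i => (w i).2))))
    -- mutual information I(X^n; U^n)
    (In : ℕ → ℝ)
    (hIn : ∀ n, In n = ∑ w : Fin n → 𝒳 × 𝒰, Pn n w *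
      Real.log (Pn n w / (PXn n (fun i => (w i).1) * PUn n (fun i => (w i).2)))) :
    ∃ MI : ℝ,
      Tendsto (fun n : ℕ => (1 / (n : ℝ)) * In n) atTop (nhds MI) ∧
      (∀ δ > (0 : ℝ),
        Tendsto (fun n => prEv (Pn n) {w | δ ≤ |Z n w - MI|}) atTop (nhds 0)) ∧
      pLimsupF Pn Z = MI ∧ pLiminfF Pn Z = MI := by
  have hT := hErg.toMeasurePreserving
  let f : (ℕ → 𝒳 × 𝒰) → 𝒳 × 𝒰 := fun ω => ω 0
  let fX : (ℕ → 𝒳 × 𝒰) → 𝒳 := fun ω => (ω 0).1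
  let fU : (ℕ → 𝒳 × 𝒰) → 𝒰 := fun ω => (ω 0).2
  have hf : Measurable f := measurable_pi_apply 0
  have hfX : Measurable fX := measurable_fst.comp hf
  have hfU : Measurable fU := measurable_snd.comp hf
  have eP : Pn = wp μ shift f := by
    funext n w
    rw [hPn, wp, Measure.real]
    congr 2
    ext ω
    simp only [Set.mem_ofPred_eq, wd, funext_iff, f, shift_iterate]
  have eX : PXn = wp μ shift fX := by
    funext n w
    rw [hPXn, wp, Measure.real]
    congr 2
    ext ω
    simp only [Set.mem_ofPred_eq, wd, funext_iff, fX, shift_iterate]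
  have eU : PUn = wp μ shift fU := by
    funext n w
    rw [hPUn, wp, Measure.real]
    congr 2
    ext ω
    simp only [Set.mem_ofPred_eq, wd, funext_iff, fU, shift_iterate]
  have hP0 : ∀ n w, 0 ≤ Pn n w := fun n w => by rw [eP]; exact wp_nonneg n w
  have hs : ∀ n, ∑ w, Pn n w = 1 := fun n => by rw [eP]; exact sum_wp hT.measurable hf n
  have cP := smb_L1 hErg hf
  have cX := smb_L1 hErg hfX
  have cU := smb_L1 hErg hfU
  set MI : ℝ := erate μ shift fX + erate μ shift fU - erate μ shift f with hMI
  have hmain : Tendsto (fun n => ∑ w, Pn n w * |Z n w - MI|) atTop (nhds 0) := by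
    have h3 := (cP.add cX).add cU
    simp only [add_zero] at h3
    refine squeeze_zero (fun n => Finset.sum_nonneg fun w _ =>
      mul_nonneg (hP0 n w) (abs_nonneg _)) (fun n => ?_) h3
    rw [eP, ← integral_wd hT.measurable hf n (fun w => |Z n w - MI|)]
    have j1 : Integrable (fun ω => |(n : ℝ)⁻¹ * -Real.log (wp μ shift f n (wd shift f n ω))
        - erate μ shift f|) μ :=
      integrable_wd hT.measurable hf n
        (fun w => |(n : ℝ)⁻¹ * -Real.log (wp μ shift f n w) - erate μ shift f|)
    have j2 : Integrable (fun ω => |(n : ℝ)⁻¹ * -Real.log (wp μ shift fX n (wd shift fX n ω))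
        - erate μ shift fX|) μ :=
      integrable_wd hT.measurable hfX n
        (fun w => |(n : ℝ)⁻¹ * -Real.log (wp μ shift fX n w) - erate μ shift fX|)
    have j3 : Integrable (fun ω => |(n : ℝ)⁻¹ * -Real.log (wp μ shift fU n (wd shift fU n ω))
        - erate μ shift fU|) μ :=
      integrable_wd hT.measurable hfU n
        (fun w => |(n : ℝ)⁻¹ * -Real.log (wp μ shift fU n w) - erate μ shift fU|)
    have j12 : Integrable (fun ω => |(n : ℝ)⁻¹ * -Real.log (wp μ shift f n (wd shift f n ω))
        - erate μ shift f| + |(n : ℝ)⁻¹ * -Real.log (wp μ shift fX n (wd shift fX n ω))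
        - erate μ shift fX|) μ := j1.add j2
    rw [← integral_add j1 j2, ← integral_add j12 j3]
    refine integral_mono_ae (integrable_wd hT.measurable hf n (fun w => |Z n w - MI|))
      ((j1.add j2).add j3) ?_
    filter_upwards [ae_wp_pos (μ := μ) hT.measurable hf n, ae_wp_pos (μ := μ) hT.measurable hfX n,
      ae_wp_pos (μ := μ) hT.measurable hfU n] with ω p1 p2 p3
    have hz : Z n (wd shift f n ω) = (n : ℝ)⁻¹ * (Real.log (wp μ shift f n (wd shift f n ω))
        - (Real.log (wp μ shift fX n (wd shift fX n ω))
          + Real.log (wp μ shift fU n (wd shift fU n ω)))) := by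
      rw [← Real.log_mul p2.ne' p3.ne', ← Real.log_div p1.ne' (mul_pos p2 p3).ne', hZ, eP, eX, eU,
        one_div]
      rfl
    rw [hz, hMI]
    generalize Real.log (wp μ shift f n (wd shift f n ω)) = a
    generalize Real.log (wp μ shift fX n (wd shift fX n ω)) = b
    generalize Real.log (wp μ shift fU n (wd shift fU n ω)) = c
    have e : (n : ℝ)⁻¹ * (a - (b + c)) - (erate μ shift fX + erate μ shift fU - erate μ shift f)
        = -((n : ℝ)⁻¹ * -a - erate μ shift f) + ((n : ℝ)⁻¹ * -b - erate μ shift fX)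
          + ((n : ℝ)⁻¹ * -c - erate μ shift fU) := by ring
    rw [e]
    refine (abs_add_le _ _).trans (add_le_add_left ((abs_add_le _ _).trans ?_) _)
    rw [abs_neg]
  refine ⟨MI, ?_, final_step Pn Z hP0 hs MI hmain⟩
  refine tendsto_iff_norm_sub_tendsto_zero.mpr (squeeze_zero (fun n => norm_nonneg _)
    (fun n => ?_) hmain)
  have e : 1 / (n : ℝ) * In n - MI = ∑ w, Pn n w * (Z n w - MI) := by
    simp only [mul_sub, Finset.sum_sub_distrib]
    rw [← Finset.sum_mul, hs, one_mul, hIn, Finset.mul_sum]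
    congr 1
    refine Finset.sum_congr rfl fun w _ => ?_
    rw [hZ]; ring
  rw [e]
  refine (norm_sum_le _ _).trans (Finset.sum_le_sum fun w _ => ?_)
  rw [norm_mul, Real.norm_of_nonneg (hP0 n w), Real.norm_eq_abs]

end
end
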